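/- arXiv:1706.09924 — 5 statements merged into one kernel-verified Lean document; each statement's English description precedes it below -/
import Mathlib

section
/- For r > 0 and x, y ∈ ℝ^d with |x| > r, |y| > r, set ζ_r(x,y) = (|x|^2 - r^2)(|y|^2 - r^2)/(r^2 |x - y|^2). Then for all x, v ∈ ℝ^d with |v| < r < |x|, (Γ((d+α)/2) Γ(d/2) / (π^d |Γ(-α/2)| Γ(α/2)^2)) ∫_{|y|>r} ( ∫_0^{ζ_r(x,y)} (u+1)^{-d/2} u^{α/2-1} du ) · |x - y|^{α-d} |v - y|^{-(α+d)} dy = π^{-(d/2+1)} Γ(d/2) sin(πα/2) · (|x|^2 - r^2)^{α/2} / ( (r^2 - |v|^2)^{α/2} |x - v|^d ). (This identity expresses that integrating out the position prior to first entry in Corollary 1.5(i) recovers the Blumenthal–Getoor–Ray first-entrance density of the ball of radius r.) -/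
open MeasureTheory Real Set

section PolarAndInversion

open Module EuclideanGeometry

variable {E : Type*} [NormedAddCommGroup E] [InnerProductSpace ℝ E] [FiniteDimensional ℝ E]
  [MeasurableSpace E] [BorelSpace E] [Nontrivial E]

/-- Integration in polar coordinates for the Lebesgue integral. -/
theorem lintegral_eq_lintegral_Ioi_sphere (f : E → ENNReal) (hf : Measurable f) :
    ∫⁻ x, f x = ∫⁻ t in Ioi (0 : ℝ), ENNReal.ofReal (t ^ (finrank ℝ E - 1)) *
      ∫⁻ ω, f (t • (ω : E)) ∂(volume : Measure E).toSphere := by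
  have h1 : ∫⁻ x, f x = ∫⁻ x : ({(0)}ᶜ : Set E), f x.1 ∂((volume : Measure E).comap (↑)) := by
    rw [lintegral_subtype_comap (measurableSet_singleton _).compl, restrict_compl_singleton]
  have h2 := (volume : Measure E).measurePreserving_homeomorphUnitSphereProd.lintegral_comp_emb
    (Homeomorph.measurableEmbedding _) (fun p => f ((p.2 : ℝ) • (p.1 : E)))
  have h3 : ∀ x : ({(0)}ᶜ : Set E),
      ((homeomorphUnitSphereProd E x).2 : ℝ) • ((homeomorphUnitSphereProd E x).1 : E) = x.1 := by
    intro x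
    have : ‖x.1‖ ≠ 0 := norm_ne_zero_iff.2 x.2
    simp [smul_smul, this]
  simp only [h3] at h2
  have hm : Measurable fun p : Metric.sphere (0 : E) 1 × Ioi (0 : ℝ) =>
      f ((p.2 : ℝ) • (p.1 : E)) := by fun_prop
  have hm' : Measurable fun t : ℝ =>
      ∫⁻ ω, f (t • (ω : E)) ∂(volume : Measure E).toSphere := by
    apply Measurable.lintegral_prod_right
    fun_prop
  rw [h1, h2, lintegral_prod_symm' _ hm, Measure.volumeIoiPow,
    ← lintegral_subtype_comap measurableSet_Ioi]
  exact lintegral_withDensity_eq_lintegral_mul _ (by fun_prop) (hm'.comp measurable_subtype_coe)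

/-- Change of variables under inversion in a sphere. -/
theorem integral_eq_integral_inversion (c : E) {R : ℝ} (hR : R ≠ 0) (f : E → ℝ) :
    ∫ y, f y = ∫ z, (R / dist z c) ^ (2 * finrank ℝ E) * f (inversion c R z) := by
  have himg : inversion c R '' {c}ᶜ = {c}ᶜ := by
    rw [image_compl_eq (inversion_bijective c hR), image_singleton, inversion_self]
  have h := integral_image_eq_integral_abs_det_fderiv_smul volume
    (measurableSet_singleton c).compl
    (fun z hz => (hasFDerivAt_inversion (R := R) hz).hasFDerivWithinAt)
    ((inversion_injective c hR).injOn) f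
  rw [himg, restrict_compl_singleton] at h
  rw [h]
  refine integral_congr_ae (.of_forall fun z => ?_)
  have hdet : |((R / dist z c) ^ 2 •
      ((ℝ ∙ (z - c))ᗮ.reflection : E →L[ℝ] E)).det| = (R / dist z c) ^ (2 * finrank ℝ E) := by
    have h1 : ((R / dist z c) ^ 2 • ((ℝ ∙ (z - c))ᗮ.reflection : E →L[ℝ] E)).det =
        ((R / dist z c) ^ 2) ^ finrank ℝ E *
          LinearMap.det ((ℝ ∙ (z - c))ᗮ.reflection.toLinearMap) := by
      rw [← LinearMap.det_smul]
      rfl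
    rw [h1, Submodule.det_reflection, abs_mul, abs_neg_one_pow, mul_one,
      abs_of_nonneg (by positivity), pow_mul]
  simp only [hdet, smul_eq_mul]

theorem lintegral_Ioo_betaKernel_sq {k s : ℝ} (hk : 0 < k) (hs : -1 < s) :
    ∫⁻ t in Ioo (0 : ℝ) 1, ENNReal.ofReal (t ^ (k - 1) * (1 - t ^ 2) ^ s) =
      ENNReal.ofReal (Real.Gamma (k / 2) * Real.Gamma (s + 1) /
        (2 * Real.Gamma (k / 2 + s + 1))) := by
  have hβ : 0 < ProbabilityTheory.beta (k / 2) (s + 1) :=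
    ProbabilityTheory.beta_pos (by linarith) (by linarith)
  have himg : (fun t : ℝ => t ^ 2) '' Ioo 0 1 = Ioo 0 1 := by
    ext y
    constructor
    · rintro ⟨t, ⟨h0, h1⟩, rfl⟩
      exact ⟨by positivity, by simpa using pow_lt_one₀ h0.le h1 two_ne_zero⟩
    · rintro ⟨h0, h1⟩
      exact ⟨√y, ⟨by positivity, by rw [Real.sqrt_lt' one_pos]; simpa⟩, Real.sq_sqrt h0.le⟩
  have h1 := ProbabilityTheory.lintegral_betaPDF_eq_one (α := k / 2) (β := s + 1)
    (by linarith) (by linarith)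
  rw [ProbabilityTheory.lintegral_betaPDF, ← himg,
    lintegral_image_eq_lintegral_abs_deriv_mul measurableSet_Ioo
      (fun t _ => (hasDerivAt_pow 2 t).hasDerivWithinAt)
      (fun a ha b hb hab => (sq_eq_sq₀ ha.1.le hb.1.le).1 hab)] at h1
  have h2 : ∀ t ∈ Ioo (0 : ℝ) 1, ENNReal.ofReal |((2 : ℕ) : ℝ) * t ^ (2 - 1)| * ENNReal.ofReal
      (1 / ProbabilityTheory.beta (k / 2) (s + 1) * (t ^ 2) ^ (k / 2 - 1) *
        (1 - t ^ 2) ^ (s + 1 - 1)) =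
      ENNReal.ofReal (2 / ProbabilityTheory.beta (k / 2) (s + 1)) *
        ENNReal.ofReal (t ^ (k - 1) * (1 - t ^ 2) ^ s) := by
    rintro t ⟨h0, h1⟩
    rw [← ENNReal.ofReal_mul (abs_nonneg _), ← ENNReal.ofReal_mul (by positivity)]
    congr 1
    have e1 : (t ^ 2) ^ (k / 2 - 1) = t ^ (k - 2) := by
      rw [← Real.rpow_natCast t 2, ← Real.rpow_mul h0.le]; congr 1; push_cast; ring
    have e2 : t ^ (k - 1) = t * t ^ (k - 2) := by
      rw [show k - 1 = 1 + (k - 2) by ring, Real.rpow_add h0, Real.rpow_one]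
    rw [e1, e2, add_sub_cancel_right, abs_of_nonneg (by positivity)]
    push_cast
    ring
  rw [setLIntegral_congr_fun measurableSet_Ioo h2,
    lintegral_const_mul' _ _ ENNReal.ofReal_ne_top] at h1
  have h3 := congrArg (fun z => ENNReal.ofReal (ProbabilityTheory.beta (k / 2) (s + 1) / 2) * z) h1
  simp only [← mul_assoc, mul_one] at h3
  rw [← ENNReal.ofReal_mul (by positivity)] at h3
  have : ProbabilityTheory.beta (k / 2) (s + 1) / 2 * (2 / ProbabilityTheory.beta (k / 2) (s + 1))
    = 1 := by field_simp
  rw [this, ENNReal.ofReal_one, one_mul] at h3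
  rw [h3, ProbabilityTheory.beta, div_div, mul_comm _ (2 : ℝ), add_assoc]

theorem lintegral_ball_one_sub_norm_sq_rpow {s : ℝ} (hs : -1 < s) :
    ∫⁻ w in Metric.ball (0 : E) 1, ENNReal.ofReal ((1 - ‖w‖ ^ 2) ^ s) =
      ENNReal.ofReal (π ^ ((finrank ℝ E : ℝ) / 2) * Real.Gamma (s + 1) /
        Real.Gamma ((finrank ℝ E : ℝ) / 2 + s + 1)) := by
  have hn : 0 < finrank ℝ E := finrank_pos
  have hn' : (0 : ℝ) < finrank ℝ E := by exact_mod_cast hn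
  rw [← lintegral_indicator measurableSet_ball, lintegral_eq_lintegral_Ioi_sphere _
    (Measurable.indicator (by fun_prop) measurableSet_ball)]
  have h1 : ∀ t ∈ Ioi (0 : ℝ), ENNReal.ofReal (t ^ (finrank ℝ E - 1)) *
      ∫⁻ ω, (Metric.ball (0 : E) 1).indicator (fun w => ENNReal.ofReal ((1 - ‖w‖ ^ 2) ^ s))
        (t • (ω : E)) ∂(volume : Measure E).toSphere =
      (Ioo (0 : ℝ) 1).indicator (fun t => ENNReal.ofReal (t ^ ((finrank ℝ E : ℝ) - 1) *
        (1 - t ^ 2) ^ s)) t * (volume : Measure E).toSphere univ := by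
    intro t ht
    have ht : 0 < t := ht
    have hnorm : ∀ ω : Metric.sphere (0 : E) 1, ‖t • (ω : E)‖ = t := fun ω => by
      simp [norm_smul, abs_of_pos ht]
    have hpow : t ^ (finrank ℝ E - 1) = t ^ ((finrank ℝ E : ℝ) - 1) := by
      rw [← Real.rpow_natCast, Nat.cast_sub hn, Nat.cast_one]
    by_cases h : t < 1
    · simp only [indicator, Metric.mem_ball, dist_zero_right, hnorm, h, ht, mem_Ioo, and_self,
        if_true, lintegral_const]
      rw [← mul_assoc, ← ENNReal.ofReal_mul (by positivity), hpow]
    · simp [indicator, Metric.mem_ball, hnorm, h]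
  have hI : Ioi (0 : ℝ) ∩ Ioo 0 1 = Ioo 0 1 := inter_eq_right.2 fun x hx => hx.1
  rw [setLIntegral_congr_fun measurableSet_Ioi h1, lintegral_mul_const' _ _ (measure_ne_top _ _),
    setLIntegral_indicator measurableSet_Ioo, inter_comm, hI, lintegral_Ioo_betaKernel_sq hn' hs,
    Measure.toSphere_apply_univ, InnerProductSpace.volume_ball, ENNReal.ofReal_one, one_pow,
    one_mul, ← ENNReal.ofReal_natCast, ← ENNReal.ofReal_mul (by positivity)]
  have g1 : 0 < Real.Gamma ((finrank ℝ E : ℝ) / 2 + s + 1) := Real.Gamma_pos_of_pos (by linarith)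
  have g2 : 0 < Real.Gamma ((finrank ℝ E : ℝ) / 2) := Real.Gamma_pos_of_pos (by linarith)
  have g3 : 0 < Real.Gamma (s + 1) := Real.Gamma_pos_of_pos (by linarith)
  rw [← ENNReal.ofReal_mul (by positivity), Real.Gamma_add_one (s := (finrank ℝ E : ℝ) / 2)
    (by positivity)]
  congr 1
  have hpi : π ^ ((finrank ℝ E : ℝ) / 2) = √π ^ finrank ℝ E := by
    rw [Real.sqrt_eq_rpow, ← Real.rpow_natCast, ← Real.rpow_mul pi_pos.le]; congr 1; ring
  rw [hpi]
  field_simp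

end PolarAndInversion

theorem lintegral_Ioo_ofReal_deriv {g g' : ℝ → ℝ} {a b : ℝ} (hab : a ≤ b)
    (hcont : ContinuousOn g (Icc a b)) (hderiv : ∀ x ∈ Ioo a b, HasDerivAt g (g' x) x)
    (hpos : ∀ x ∈ Ioo a b, 0 ≤ g' x) :
    ∫⁻ x in Ioo a b, ENNReal.ofReal (g' x) = ENNReal.ofReal (g b - g a) := by
  have hinteg := intervalIntegral.integrableOn_deriv_of_nonneg hcont hderiv hpos
  rw [← intervalIntegral.integral_eq_sub_of_hasDerivAt_of_le hab hcont hderiv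
    ((intervalIntegrable_iff_integrableOn_Ioc_of_le hab).2 hinteg),
    intervalIntegral.integral_of_le hab, integral_Ioc_eq_integral_Ioo,
    ofReal_integral_eq_lintegral_ofReal (hinteg.mono_set Ioo_subset_Ioc_self)
      (ae_restrict_of_forall_mem measurableSet_Ioo hpos)]

theorem lintegral_Ioo_mul_sq_sub_sq_rpow {s r t : ℝ} (hs : -1 < s) (hr : 0 ≤ r) (hrt : r ≤ t) :
    ∫⁻ τ in Ioo r t, ENNReal.ofReal (2 * (s + 1) * τ * (τ ^ 2 - r ^ 2) ^ s) =
      ENNReal.ofReal ((t ^ 2 - r ^ 2) ^ (s + 1)) := by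
  have h := lintegral_Ioo_ofReal_deriv (g := fun τ => (τ ^ 2 - r ^ 2) ^ (s + 1))
    (g' := fun τ => 2 * (s + 1) * τ * (τ ^ 2 - r ^ 2) ^ s) hrt ?_ ?_ ?_
  · rw [h, sub_self, Real.zero_rpow (by linarith), sub_zero]
  · exact ContinuousOn.rpow_const (by fun_prop) fun x _ => Or.inr (by linarith)
  · intro x hx
    have hpos : 0 < x ^ 2 - r ^ 2 := by nlinarith [hx.1]
    have h1 := ((hasDerivAt_pow 2 x).sub_const (r ^ 2)).rpow_const (p := s + 1) (Or.inl hpos.ne')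
    convert h1 using 1
    simp only [add_sub_cancel_right]
    push_cast
    ring
  · intro x hx
    have hpos : 0 < x ^ 2 - r ^ 2 := by nlinarith [hx.1]
    have : 0 < x := hr.trans_lt hx.1
    have : 0 < s + 1 := by linarith
    positivity

section Kelvin

open Module EuclideanGeometry

variable {E : Type*} [NormedAddCommGroup E] [InnerProductSpace ℝ E]

/-- The square of `‖b‖ * ‖w - b / ‖b‖ ^ 2‖`, extended by continuity to `b = 0`. -/
noncomputable def kelvinSq (b w : E) : ℝ := 1 - 2 * inner ℝ b w + ‖b‖ ^ 2 * ‖w‖ ^ 2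

theorem kelvinSq_zero_left (w : E) : kelvinSq 0 w = 1 := by simp [kelvinSq]

theorem kelvinSq_smul_right (t : ℝ) (b w : E) : kelvinSq b (t • w) = kelvinSq (t • b) w := by
  simp only [kelvinSq, inner_smul_left, inner_smul_right, norm_smul, mul_pow, conj_trivial]
  ring

theorem kelvinSq_pos {b w : E} (h : ‖b‖ * ‖w‖ < 1) : 0 < kelvinSq b w := by
  have h1 := real_inner_le_norm b w
  have h2 : 0 < (1 - ‖b‖ * ‖w‖) ^ 2 := pow_pos (by linarith) 2
  unfold kelvinSq
  nlinarith

theorem kelvinSq_pos_of_mem_ball {b w : E} (hb : ‖b‖ < 1) (hw : w ∈ Metric.ball (0 : E) 1) :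
    0 < kelvinSq b w :=
  kelvinSq_pos (mul_lt_one_of_nonneg_of_lt_one_left (norm_nonneg _) hb
    (mem_ball_zero_iff.1 hw).le)

theorem kelvinSq_eq_of_ne_zero {b : E} (hb : b ≠ 0) (w : E) :
    kelvinSq b w = ‖b‖ ^ 2 * ‖w - (‖b‖ ^ 2)⁻¹ • b‖ ^ 2 := by
  have : ‖b‖ ≠ 0 := norm_ne_zero_iff.2 hb
  rw [norm_sub_sq_real, inner_smul_right, norm_smul, real_inner_comm, kelvinSq, norm_inv, norm_pow,
    norm_norm]
  field_simp
  ring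

@[fun_prop]
theorem continuous_kelvinSq : Continuous fun p : E × E => kelvinSq p.1 p.2 := by
  unfold kelvinSq
  fun_prop

theorem norm_smul_lt_one {a : E} (ha : ‖a‖ < 1) {t : ℝ} (ht : t ∈ Icc (0 : ℝ) 1) :
    ‖t • a‖ < 1 := by
  rw [norm_smul, Real.norm_of_nonneg ht.1]
  exact (mul_le_of_le_one_left (norm_nonneg a) ht.2).trans_lt ha

theorem ballPotential_integrand_nonneg {b w : E} (s e : ℝ) (hb : ‖b‖ < 1)
    (hw : w ∈ Metric.ball (0 : E) 1) : 0 ≤ (1 - ‖w‖ ^ 2) ^ s * kelvinSq b w ^ e := by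
  have h := mem_ball_zero_iff.1 hw
  have := kelvinSq_pos_of_mem_ball hb hw
  have : 0 ≤ 1 - ‖w‖ ^ 2 := by nlinarith [norm_nonneg w]
  positivity

variable [FiniteDimensional ℝ E]

theorem exists_kelvinSq_rpow_le {a : E} (ha : ‖a‖ < 1) (e : ℝ) :
    ∃ M, ∀ t ∈ Icc (0 : ℝ) 1, ∀ w ∈ Metric.ball (0 : E) 1, kelvinSq (t • a) w ^ e ≤ M := by
  have hK : IsCompact (Icc (0 : ℝ) 1 ×ˢ Metric.closedBall (0 : E) 1) :=
    isCompact_Icc.prod (isCompact_closedBall _ _)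
  have hc : ContinuousOn (fun p : ℝ × E => kelvinSq (p.1 • a) p.2 ^ e)
      (Icc (0 : ℝ) 1 ×ˢ Metric.closedBall (0 : E) 1) := by
    refine ContinuousOn.rpow_const ?_ fun p hp => Or.inl ?_
    · exact (continuous_kelvinSq.comp
        (by fun_prop : Continuous fun p : ℝ × E => (p.1 • a, p.2))).continuousOn
    · exact (kelvinSq_pos (mul_lt_one_of_nonneg_of_lt_one_left (norm_nonneg _)
        (norm_smul_lt_one ha hp.1) (mem_closedBall_zero_iff.1 hp.2))).ne'
  obtain ⟨M, hM⟩ := hK.exists_bound_of_continuousOn hc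
  exact ⟨M, fun t ht w hw =>
    (le_abs_self _).trans (hM (t, w) ⟨ht, Metric.ball_subset_closedBall hw⟩)⟩

variable [MeasurableSpace E] [BorelSpace E]

/-- The weighted integral of a power of the Kelvin kernel over the unit ball. -/
noncomputable def ballPotential (s e : ℝ) (b : E) : ℝ :=
  ∫ w in Metric.ball (0 : E) 1, (1 - ‖w‖ ^ 2) ^ s * kelvinSq b w ^ e

theorem ballPotential_nonneg (s e : ℝ) {b : E} (hb : ‖b‖ < 1) : 0 ≤ ballPotential s e b :=
  setIntegral_nonneg measurableSet_ball fun _ hw => ballPotential_integrand_nonneg s e hb hw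

variable [Nontrivial E]

theorem integrableOn_ball_one_sub_norm_sq_rpow {s : ℝ} (hs : -1 < s) :
    IntegrableOn (fun w : E => (1 - ‖w‖ ^ 2) ^ s) (Metric.ball 0 1) := by
  refine ⟨Measurable.aestronglyMeasurable (by fun_prop), ?_⟩
  rw [hasFiniteIntegral_iff_ofReal, lintegral_ball_one_sub_norm_sq_rpow hs]
  · exact ENNReal.ofReal_lt_top
  · refine ae_restrict_of_forall_mem measurableSet_ball fun w hw => ?_
    have := mem_ball_zero_iff.1 hw
    exact Real.rpow_nonneg (by nlinarith [norm_nonneg w]) _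

theorem integral_ball_one_sub_norm_sq_rpow {s : ℝ} (hs : -1 < s) :
    ∫ w in Metric.ball (0 : E) 1, (1 - ‖w‖ ^ 2) ^ s =
      π ^ ((finrank ℝ E : ℝ) / 2) * Real.Gamma (s + 1) /
        Real.Gamma ((finrank ℝ E : ℝ) / 2 + s + 1) := by
  have hn : (0 : ℝ) < finrank ℝ E := by exact_mod_cast (finrank_pos : 0 < finrank ℝ E)
  have g1 : 0 < Real.Gamma ((finrank ℝ E : ℝ) / 2 + s + 1) := Real.Gamma_pos_of_pos (by linarith)
  have g3 : 0 < Real.Gamma (s + 1) := Real.Gamma_pos_of_pos (by linarith)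
  rw [integral_eq_lintegral_of_nonneg_ae _ (Measurable.aestronglyMeasurable (by fun_prop)),
    lintegral_ball_one_sub_norm_sq_rpow hs, ENNReal.toReal_ofReal (by positivity)]
  refine ae_restrict_of_forall_mem measurableSet_ball fun w hw => ?_
  have := mem_ball_zero_iff.1 hw
  exact Real.rpow_nonneg (by nlinarith [norm_nonneg w]) _

theorem integrableOn_ballPotential {s : ℝ} (hs : -1 < s) (e : ℝ) {b : E} (hb : ‖b‖ < 1) :
    IntegrableOn (fun w => (1 - ‖w‖ ^ 2) ^ s * kelvinSq b w ^ e) (Metric.ball 0 1) := by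
  obtain ⟨M, hM⟩ := exists_kelvinSq_rpow_le hb e
  refine ((integrableOn_ball_one_sub_norm_sq_rpow hs).mul_const M).mono'
    (Measurable.aestronglyMeasurable (by fun_prop))
    (ae_restrict_of_forall_mem measurableSet_ball fun w hw => ?_)
  rw [Real.norm_of_nonneg (ballPotential_integrand_nonneg s e hb hw)]
  have := mem_ball_zero_iff.1 hw
  have h1 := hM 1 (by simp) w hw
  rw [one_smul] at h1
  exact mul_le_mul_of_nonneg_left h1 (Real.rpow_nonneg (by nlinarith [norm_nonneg w]) _)

theorem ofReal_ballPotential {s : ℝ} (hs : -1 < s) (e : ℝ) {b : E} (hb : ‖b‖ < 1) :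
    ENNReal.ofReal (ballPotential s e b) =
      ∫⁻ w in Metric.ball (0 : E) 1, ENNReal.ofReal ((1 - ‖w‖ ^ 2) ^ s * kelvinSq b w ^ e) :=
  ofReal_integral_eq_lintegral_ofReal (integrableOn_ballPotential hs e hb)
    (ae_restrict_of_forall_mem measurableSet_ball fun _ hw =>
      ballPotential_integrand_nonneg s e hb hw)

theorem continuousOn_ballPotential_smul {s : ℝ} (hs : -1 < s) (e : ℝ) {a : E} (ha : ‖a‖ < 1) :
    ContinuousOn (fun t : ℝ => ballPotential s e (t • a)) (Icc 0 1) := by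
  obtain ⟨M, hM⟩ := exists_kelvinSq_rpow_le ha e
  refine continuousOn_of_dominated (bound := fun w => (1 - ‖w‖ ^ 2) ^ s * M)
    (fun t _ => Measurable.aestronglyMeasurable (by fun_prop)) (fun t ht => ?_)
    ((integrableOn_ball_one_sub_norm_sq_rpow hs).mul_const M) ?_
  · refine ae_restrict_of_forall_mem measurableSet_ball fun w hw => ?_
    rw [Real.norm_of_nonneg (ballPotential_integrand_nonneg s e (norm_smul_lt_one ha ht) hw)]
    have := mem_ball_zero_iff.1 hw
    exact mul_le_mul_of_nonneg_left (hM t ht w hw)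
      (Real.rpow_nonneg (by nlinarith [norm_nonneg w]) _)
  · refine ae_restrict_of_forall_mem measurableSet_ball fun w hw => ?_
    refine continuousOn_const.mul (ContinuousOn.rpow_const ?_ fun t ht => Or.inl
      (kelvinSq_pos_of_mem_ball (norm_smul_lt_one ha ht) hw).ne')
    exact (continuous_kelvinSq.comp
      (by fun_prop : Continuous fun t : ℝ => (t • a, w))).continuousOn

/-- Inversion in the sphere centred at `b / ‖b‖ ^ 2` which preserves the unit ball relates
Kelvin kernel integrals with complementary exponents. -/
theorem ballPotential_eq_rpow_mul {s e : ℝ} {b : E} (hb : ‖b‖ < 1) :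
    ballPotential s e b = (1 - ‖b‖ ^ 2) ^ (s + finrank ℝ E + 2 * e) *
      ballPotential s (-s - finrank ℝ E - e) b := by
  rcases eq_or_ne b 0 with rfl | hb0
  · simp [ballPotential, kelvinSq_zero_left]
  have hβ : 0 < ‖b‖ := norm_pos_iff.2 hb0
  set c : E := (‖b‖ ^ 2)⁻¹ • b with hc
  have hgap : 0 < 1 - ‖b‖ ^ 2 := by nlinarith
  set R : ℝ := √((1 - ‖b‖ ^ 2) / ‖b‖ ^ 2) with hRdef
  have hR2 : R ^ 2 = (1 - ‖b‖ ^ 2) / ‖b‖ ^ 2 := Real.sq_sqrt (by positivity)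
  have hRpos : 0 < R := Real.sqrt_pos.2 (by positivity)
  have hkel : ∀ w, kelvinSq b w = ‖b‖ ^ 2 * ‖w - c‖ ^ 2 := kelvinSq_eq_of_ne_zero hb0
  have hnorm : ∀ w, w ≠ c →
      1 - ‖inversion c R w‖ ^ 2 = (1 - ‖b‖ ^ 2) * (1 - ‖w‖ ^ 2) / kelvinSq b w := by
    intro w hw
    have hwc : ‖w - c‖ ≠ 0 := norm_ne_zero_iff.2 (sub_ne_zero.2 hw)
    have hcn : ‖c‖ ^ 2 = 1 / ‖b‖ ^ 2 := by
      rw [hc, norm_smul, norm_inv, norm_pow, norm_norm]; field_simp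
    have h1 : inversion c R w = (R / ‖w - c‖) ^ 2 • (w - c) + c := by
      simp [inversion, dist_eq_norm]
    have h2 : inner ℝ (w - c) c = (‖w‖ ^ 2 - ‖w - c‖ ^ 2 - ‖c‖ ^ 2) / 2 := by
      have := norm_add_sq_real (w - c) c
      rw [sub_add_cancel] at this
      linarith
    rw [h1, norm_add_sq_real, norm_smul, inner_smul_left, h2, hcn, hkel]
    simp only [conj_trivial, norm_pow, norm_div, norm_norm, Real.norm_of_nonneg hgap.le,
      div_pow, mul_pow, hR2]
    field_simp
    ring
  have hk : ∀ w, w ≠ c → kelvinSq b (inversion c R w) = (1 - ‖b‖ ^ 2) ^ 2 / kelvinSq b w := by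
    intro w hw
    have hwc : ‖w - c‖ ≠ 0 := norm_ne_zero_iff.2 (sub_ne_zero.2 hw)
    rw [hkel, hkel, ← dist_eq_norm, dist_inversion_center, dist_eq_norm, hR2]
    field_simp
  have hkpos : ∀ w, w ≠ c → 0 < kelvinSq b w := by
    intro w hw
    have hwc : 0 < ‖w - c‖ := norm_pos_iff.2 (sub_ne_zero.2 hw)
    rw [hkel]; positivity
  have hJ : ∀ w, w ≠ c → (R / dist w c) ^ (2 * finrank ℝ E) =
      ((1 - ‖b‖ ^ 2) / kelvinSq b w) ^ (finrank ℝ E : ℝ) := by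
    intro w hw
    have hwc : ‖w - c‖ ≠ 0 := norm_ne_zero_iff.2 (sub_ne_zero.2 hw)
    rw [Real.rpow_natCast, pow_mul, div_pow, hR2, hkel, dist_eq_norm, div_div]
  have hball : ∀ w, w ≠ c → (inversion c R w ∈ Metric.ball (0 : E) 1 ↔
      w ∈ Metric.ball (0 : E) 1) := by
    intro w hw
    have h1 : ∀ z : E, z ∈ Metric.ball (0 : E) 1 ↔ 0 < 1 - ‖z‖ ^ 2 := fun z => by
      rw [mem_ball_zero_iff, sub_pos, sq_lt_one_iff₀ (norm_nonneg z)]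
    rw [h1, h1, hnorm w hw]
    have := hkpos w hw
    rw [div_pos_iff_of_pos_right this, mul_pos_iff_of_pos_left hgap]
  rw [ballPotential, ← integral_indicator measurableSet_ball,
    integral_eq_integral_inversion c hRpos.ne', ballPotential,
    ← integral_const_mul, ← integral_indicator measurableSet_ball]
  refine integral_congr_ae ?_
  have hne : ∀ᵐ w : E, w ≠ c := by simp [ae_iff]
  filter_upwards [hne] with w hw
  by_cases hwb : w ∈ Metric.ball (0 : E) 1
  · rw [indicator_of_mem ((hball w hw).2 hwb), indicator_of_mem hwb, hnorm w hw, hk w hw, hJ w hw]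
    have k1 := hkpos w hw
    have k2 : 0 < 1 - ‖w‖ ^ 2 := by
      have := mem_ball_zero_iff.1 hwb
      nlinarith [norm_nonneg w]
    rw [Real.div_rpow hgap.le k1.le, Real.div_rpow (by positivity) k1.le,
      Real.div_rpow (by positivity) k1.le, Real.mul_rpow hgap.le k2.le,
      ← Real.rpow_natCast (1 - ‖b‖ ^ 2) 2, ← Real.rpow_mul hgap.le, Real.rpow_add hgap,
      Real.rpow_add hgap, Real.rpow_sub k1, Real.rpow_sub k1, Real.rpow_neg k1.le]
    push_cast
    field_simp
  · rw [indicator_of_notMem (fun h => hwb ((hball w hw).1 h)), indicator_of_notMem hwb, mul_zero]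

end Kelvin

section BallPotential

open Module

variable {E : Type*} [NormedAddCommGroup E] [InnerProductSpace ℝ E] [FiniteDimensional ℝ E]
  [MeasurableSpace E] [BorelSpace E]

theorem lintegral_eq_pow_finrank_mul_lintegral_smul (f : E → ENNReal) {τ : ℝ} (hτ : 0 < τ) :
    ∫⁻ w, f w = ENNReal.ofReal (τ ^ finrank ℝ E) * ∫⁻ w, f (τ • w) := by
  have h1 := lintegral_map_equiv (μ := (volume : Measure E)) f
    (Homeomorph.smulOfNeZero τ hτ.ne').toMeasurableEquiv
  have h2 : Measure.map (Homeomorph.smulOfNeZero τ hτ.ne').toMeasurableEquiv (volume : Measure E) =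
      ENNReal.ofReal (abs (τ ^ finrank ℝ E)⁻¹) • volume := Measure.map_addHaar_smul _ hτ.ne'
  rw [h2, lintegral_smul_measure, smul_eq_mul] at h1
  have h3 : ∫⁻ w, f (τ • w) = ENNReal.ofReal (abs (τ ^ finrank ℝ E)⁻¹) * ∫⁻ w, f w := h1.symm
  rw [h3, ← mul_assoc, ← ENNReal.ofReal_mul (by positivity), abs_of_pos (by positivity),
    mul_inv_cancel₀ (by positivity), ENNReal.ofReal_one, one_mul]

theorem lintegral_ball_lintegral_Ioo_swap {F : E → ℝ → ENNReal}
    (hF : Measurable (Function.uncurry F)) (t : ℝ) :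
    ∫⁻ w in Metric.ball (0 : E) t, ∫⁻ τ in Ioo ‖w‖ t, F w τ =
      ∫⁻ τ in Ioo 0 t, ∫⁻ w in Metric.ball (0 : E) τ, F w τ := by
  have hmeas : Measurable ({q : E × ℝ | ‖q.1‖ < q.2}.indicator (Function.uncurry F)) :=
    hF.indicator (measurableSet_lt (by fun_prop) (by fun_prop))
  have hswap := lintegral_lintegral_swap (μ := (volume : Measure E))
    (ν := volume.restrict (Ioo 0 t))
    (f := fun w τ => {q : E × ℝ | ‖q.1‖ < q.2}.indicator (Function.uncurry F) (w, τ))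
    hmeas.aemeasurable
  have hright : ∀ τ : ℝ, ∫⁻ w in Metric.ball (0 : E) τ, F w τ =
      ∫⁻ w, {q : E × ℝ | ‖q.1‖ < q.2}.indicator (Function.uncurry F) (w, τ) := by
    intro τ
    rw [← lintegral_indicator measurableSet_ball]
    congr 1 with w
    simp [indicator, Function.uncurry]
  simp only [hright]
  rw [← hswap, ← lintegral_indicator measurableSet_ball]
  congr 1 with w
  have hind : ∀ τ, {q : E × ℝ | ‖q.1‖ < q.2}.indicator (Function.uncurry F) (w, τ) =
      (Ioi ‖w‖).indicator (F w) τ := fun τ => by simp [indicator, Function.uncurry]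
  have hI : Ioi ‖w‖ ∩ Ioo 0 t = Ioo ‖w‖ t := by
    ext τ
    simp only [mem_inter_iff, mem_Ioi, mem_Ioo]
    exact ⟨fun h => ⟨h.1, h.2.2⟩, fun h => ⟨h.1, (norm_nonneg w).trans_lt h.1, h.2⟩⟩
  simp only [hind]
  rw [setLIntegral_indicator measurableSet_Ioi, hI]
  by_cases hw : ‖w‖ < t
  · rw [indicator_of_mem (mem_ball_zero_iff.2 hw)]
  · rw [indicator_of_notMem (by rwa [mem_ball_zero_iff]), Ioo_eq_empty hw]
    simp

theorem lintegral_ball_sq_sub_norm_sq_rpow_add_one_mul {s : ℝ} (hs : -1 < s) (e : ℝ) (a : E)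
    {t : ℝ} :
    ∫⁻ w in Metric.ball (0 : E) t,
        ENNReal.ofReal ((t ^ 2 - ‖w‖ ^ 2) ^ (s + 1)) * ENNReal.ofReal (kelvinSq a w ^ e) =
      ∫⁻ τ in Ioo 0 t, ∫⁻ w in Metric.ball (0 : E) τ,
        ENNReal.ofReal (2 * (s + 1) * τ * (τ ^ 2 - ‖w‖ ^ 2) ^ s) *
          ENNReal.ofReal (kelvinSq a w ^ e) := by
  rw [← lintegral_ball_lintegral_Ioo_swap (F := fun w τ => ENNReal.ofReal
    (2 * (s + 1) * τ * (τ ^ 2 - ‖w‖ ^ 2) ^ s) * ENNReal.ofReal (kelvinSq a w ^ e)) (by fun_prop)]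
  refine setLIntegral_congr_fun measurableSet_ball fun w hw => ?_
  simp only [lintegral_mul_const' _ _ ENNReal.ofReal_ne_top,
    lintegral_Ioo_mul_sq_sub_sq_rpow hs (norm_nonneg w) (mem_ball_zero_iff.1 hw).le]

variable [Nontrivial E]

theorem lintegral_ball_sq_sub_norm_sq_rpow_mul {s : ℝ} (hs : -1 < s) (e : ℝ) {a : E}
    (ha : ‖a‖ < 1) {τ : ℝ} (hτ : τ ∈ Ioc (0 : ℝ) 1) :
    ∫⁻ w in Metric.ball (0 : E) τ, ENNReal.ofReal ((τ ^ 2 - ‖w‖ ^ 2) ^ s * kelvinSq a w ^ e) =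
      ENNReal.ofReal (τ ^ (2 * s + finrank ℝ E) * ballPotential s e (τ • a)) := by
  have hτ0 : 0 < τ := hτ.1
  rw [← lintegral_indicator measurableSet_ball,
    lintegral_eq_pow_finrank_mul_lintegral_smul _ hτ0, ENNReal.ofReal_mul (by positivity),
    ofReal_ballPotential hs e (norm_smul_lt_one ha ⟨hτ0.le, hτ.2⟩), Real.rpow_add hτ0,
    mul_comm (τ ^ (2 * s)), ENNReal.ofReal_mul (by positivity), Real.rpow_natCast, mul_assoc]
  congr 1
  rw [← lintegral_const_mul' _ _ ENNReal.ofReal_ne_top, ← lintegral_indicator measurableSet_ball]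
  refine lintegral_congr fun w => ?_
  have hiff : τ • w ∈ Metric.ball (0 : E) τ ↔ w ∈ Metric.ball (0 : E) 1 := by
    rw [mem_ball_zero_iff, mem_ball_zero_iff, norm_smul, Real.norm_of_nonneg hτ0.le,
      mul_lt_iff_lt_one_right hτ0]
  by_cases hw : w ∈ Metric.ball (0 : E) 1
  · rw [indicator_of_mem (hiff.2 hw), indicator_of_mem hw, ← ENNReal.ofReal_mul (by positivity),
      kelvinSq_smul_right, norm_smul, Real.norm_of_nonneg hτ0.le, mul_pow]
    have : 0 ≤ 1 - ‖w‖ ^ 2 := by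
      have := mem_ball_zero_iff.1 hw
      nlinarith [norm_nonneg w]
    rw [show τ ^ 2 - τ ^ 2 * ‖w‖ ^ 2 = τ ^ 2 * (1 - ‖w‖ ^ 2) by ring,
      Real.mul_rpow (by positivity) this, ← Real.rpow_natCast τ 2, ← Real.rpow_mul hτ0.le]
    push_cast
    rw [mul_assoc]
  · rw [indicator_of_notMem (fun h => hw (hiff.1 h)), indicator_of_notMem hw]

theorem rpow_mul_ballPotential_add_one_eq_integral {s : ℝ} (hs : -1 < s) (e : ℝ) {a : E}
    (ha : ‖a‖ < 1) {t : ℝ} (ht : t ∈ Ioc (0 : ℝ) 1) :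
    t ^ (2 * s + 2 + finrank ℝ E) * ballPotential (s + 1) e (t • a) =
      ∫ τ in (0 : ℝ)..t, 2 * (s + 1) * τ ^ (2 * s + finrank ℝ E + 1) *
        ballPotential s e (τ • a) := by
  have hs1 : 0 < s + 1 := by linarith
  have hn : (1 : ℝ) ≤ finrank ℝ E := by exact_mod_cast (finrank_pos : 0 < finrank ℝ E)
  have hsub : Ioo 0 t ⊆ Icc (0 : ℝ) 1 := fun τ hτ => ⟨hτ.1.le, hτ.2.le.trans ht.2⟩
  have hB := lintegral_ball_sq_sub_norm_sq_rpow_add_one_mul hs e a (t := t)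
  have hleft : ∫⁻ w in Metric.ball (0 : E) t,
        ENNReal.ofReal ((t ^ 2 - ‖w‖ ^ 2) ^ (s + 1)) * ENNReal.ofReal (kelvinSq a w ^ e) =
      ENNReal.ofReal (t ^ (2 * s + 2 + finrank ℝ E) * ballPotential (s + 1) e (t • a)) := by
    rw [show 2 * s + 2 + (finrank ℝ E : ℝ) = 2 * (s + 1) + finrank ℝ E by ring,
      ← lintegral_ball_sq_sub_norm_sq_rpow_mul (by linarith) e ha ht]
    refine setLIntegral_congr_fun measurableSet_ball fun w hw => ?_
    have := mem_ball_zero_iff.1 hw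
    exact (ENNReal.ofReal_mul (Real.rpow_nonneg (by nlinarith [norm_nonneg w]) _)).symm
  have hright : ∀ τ ∈ Ioo 0 t, ∫⁻ w in Metric.ball (0 : E) τ,
        ENNReal.ofReal (2 * (s + 1) * τ * (τ ^ 2 - ‖w‖ ^ 2) ^ s) *
          ENNReal.ofReal (kelvinSq a w ^ e) =
      ENNReal.ofReal (2 * (s + 1) * τ ^ (2 * s + finrank ℝ E + 1) *
        ballPotential s e (τ • a)) := by
    intro τ hτ
    have hτ0 : 0 < τ := hτ.1
    have h1 := lintegral_ball_sq_sub_norm_sq_rpow_mul hs e ha ⟨hτ0, (hsub hτ).2⟩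
    rw [Real.rpow_add_one hτ0.ne', show 2 * (s + 1) * (τ ^ (2 * s + (finrank ℝ E : ℝ)) * τ) *
      ballPotential s e (τ • a) = (2 * (s + 1) * τ) * (τ ^ (2 * s + (finrank ℝ E : ℝ)) *
      ballPotential s e (τ • a)) by ring, ENNReal.ofReal_mul (by positivity), ← h1,
      ← lintegral_const_mul' _ _ ENNReal.ofReal_ne_top]
    refine setLIntegral_congr_fun measurableSet_ball fun w hw => ?_
    have := mem_ball_zero_iff.1 hw
    have h2 : 0 ≤ (τ ^ 2 - ‖w‖ ^ 2) ^ s := Real.rpow_nonneg (by nlinarith [norm_nonneg w]) _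
    rw [← ENNReal.ofReal_mul (by positivity), ← ENNReal.ofReal_mul (by positivity), mul_assoc]
  rw [hleft, setLIntegral_congr_fun measurableSet_Ioo hright] at hB
  have hcont : ContinuousOn (fun τ => 2 * (s + 1) * τ ^ (2 * s + (finrank ℝ E : ℝ) + 1) *
      ballPotential s e (τ • a)) (Icc 0 1) := by
    refine ContinuousOn.mul (continuousOn_const.mul ?_) (continuousOn_ballPotential_smul hs e ha)
    exact continuousOn_id.rpow_const fun x _ => Or.inr (by linarith)
  have hinteg : IntegrableOn (fun τ => 2 * (s + 1) * τ ^ (2 * s + (finrank ℝ E : ℝ) + 1) *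
      ballPotential s e (τ • a)) (Ioo 0 t) :=
    (hcont.integrableOn_compact isCompact_Icc).mono_set hsub
  have hnn : ∀ τ ∈ Icc (0 : ℝ) 1, 0 ≤ 2 * (s + 1) * τ ^ (2 * s + (finrank ℝ E : ℝ) + 1) *
      ballPotential s e (τ • a) := fun τ hτ => by
    have := ballPotential_nonneg s e (norm_smul_lt_one ha hτ)
    have := hτ.1
    positivity
  rw [← ofReal_integral_eq_lintegral_ofReal hinteg
    (ae_restrict_of_forall_mem measurableSet_Ioo fun τ hτ => hnn τ (hsub hτ)),
    ENNReal.ofReal_eq_ofReal_iff] at hB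
  · rw [hB, intervalIntegral.integral_of_le ht.1.le, integral_Ioc_eq_integral_Ioo]
  · have := ballPotential_nonneg (s + 1) e (norm_smul_lt_one ha ⟨ht.1.le, ht.2⟩)
    have := ht.1
    positivity
  · exact setIntegral_nonneg measurableSet_Ioo fun τ hτ => hnn τ (hsub hτ)

theorem hasDerivAt_rpow_mul_ballPotential_add_one {s : ℝ} (hs : -1 < s) (e : ℝ) {a : E}
    (ha : ‖a‖ < 1) {t : ℝ} (ht : t ∈ Ioo (0 : ℝ) 1) :
    HasDerivAt (fun t => t ^ (2 * s + 2 + finrank ℝ E) * ballPotential (s + 1) e (t • a))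
      (2 * (s + 1) * t ^ (2 * s + finrank ℝ E + 1) * ballPotential s e (t • a)) t := by
  have hn : (1 : ℝ) ≤ finrank ℝ E := by exact_mod_cast (finrank_pos : 0 < finrank ℝ E)
  have hcont : ContinuousOn (fun τ => 2 * (s + 1) * τ ^ (2 * s + (finrank ℝ E : ℝ) + 1) *
      ballPotential s e (τ • a)) (Icc 0 1) := by
    refine ContinuousOn.mul (continuousOn_const.mul ?_) (continuousOn_ballPotential_smul hs e ha)
    exact continuousOn_id.rpow_const fun x _ => Or.inr (by linarith)
  have hnhds : Icc (0 : ℝ) 1 ∈ nhds t := Icc_mem_nhds ht.1 ht.2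
  have h := intervalIntegral.integral_hasDerivAt_right (a := 0) (b := t)
    (f := fun τ => 2 * (s + 1) * τ ^ (2 * s + (finrank ℝ E : ℝ) + 1) * ballPotential s e (τ • a))
    ((hcont.mono (by rw [uIcc_of_le ht.1.le]; exact Icc_subset_Icc_right ht.2.le)).intervalIntegrable)
    ((hcont.mono Ioo_subset_Icc_self).stronglyMeasurableAtFilter isOpen_Ioo _ ht)
    (hcont.continuousAt hnhds)
  refine h.congr_of_eventuallyEq ?_
  filter_upwards [Ioo_mem_nhds ht.1 ht.2] with τ hτ
  exact rpow_mul_ballPotential_add_one_eq_integral hs e ha ⟨hτ.1, hτ.2.le⟩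

end BallPotential

section Contiguity

open Module

variable {E : Type*} [NormedAddCommGroup E] [InnerProductSpace ℝ E] [FiniteDimensional ℝ E]
  [MeasurableSpace E] [BorelSpace E] [Nontrivial E]

theorem ballPotential_one_sub_half_finrank_eq {s : ℝ} (hs : -1 < s) {a : E} (ha : ‖a‖ < 1) {t : ℝ}
    (ht : t ∈ Ioo (0 : ℝ) 1) :
    ballPotential s (1 - (finrank ℝ E : ℝ) / 2) (t • a) =
      (1 - t ^ 2 * ‖a‖ ^ 2) * ballPotential s (-(finrank ℝ E : ℝ) / 2) (t • a) +
        t ^ 2 * ‖a‖ ^ 2 * ballPotential (s + 1) (-(finrank ℝ E : ℝ) / 2) (t • a) := by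
  have ht0 : 0 < t := ht.1
  have hs1 : 0 < s + 1 := by linarith
  set n : ℝ := (finrank ℝ E : ℝ) with hn
  have hnorm : ∀ τ ∈ Ioo (0 : ℝ) 1, ‖τ • a‖ ^ 2 = τ ^ 2 * ‖a‖ ^ 2 := fun τ _ => by
    rw [norm_smul, mul_pow, Real.norm_eq_abs, sq_abs]
  have hlt : ∀ τ ∈ Ioo (0 : ℝ) 1, ‖τ • a‖ < 1 := fun τ hτ => norm_smul_lt_one ha ⟨hτ.1.le, hτ.2.le⟩
  have hgap : ∀ τ ∈ Ioo (0 : ℝ) 1, 0 < 1 - τ ^ 2 * ‖a‖ ^ 2 := fun τ hτ => by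
    rw [← hnorm τ hτ]
    nlinarith [hlt τ hτ, norm_nonneg (τ • a)]
  have hinv1 : ∀ τ ∈ Ioo (0 : ℝ) 1, ballPotential (s + 1) (-n / 2) (τ • a) =
      (1 - τ ^ 2 * ‖a‖ ^ 2) ^ (s + 1) * ballPotential (s + 1) (-s - n / 2 - 1) (τ • a) := by
    intro τ hτ
    rw [ballPotential_eq_rpow_mul (hlt τ hτ), hnorm τ hτ, ← hn]
    congr 2 <;> ring
  have hinv2 : ballPotential s (1 - n / 2) (t • a) =
      (1 - t ^ 2 * ‖a‖ ^ 2) ^ (s + 2) * ballPotential s (-s - n / 2 - 1) (t • a) := by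
    rw [ballPotential_eq_rpow_mul (hlt t ht), hnorm t ht, ← hn]
    congr 2 <;> ring
  have hd1 := hasDerivAt_rpow_mul_ballPotential_add_one hs (-n / 2) ha ht
  have hd2 := hasDerivAt_rpow_mul_ballPotential_add_one hs (-s - n / 2 - 1) ha ht
  have hd3 := ((((hasDerivAt_pow 2 t).mul_const (‖a‖ ^ 2)).const_sub 1).rpow_const (p := s + 1)
    (Or.inl (hgap t ht).ne')).mul hd2
  have hd4 := hd3.congr_of_eventuallyEq (f₁ := fun τ => τ ^ (2 * s + 2 + n) *
    ballPotential (s + 1) (-n / 2) (τ • a)) (by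
      filter_upwards [Ioo_mem_nhds ht.1 ht.2] with τ hτ
      simp only [Pi.mul_apply, hinv1 τ hτ, ← hn]
      ring)
  have key := hd1.unique hd4
  have hg := hgap t ht
  set g := 1 - t ^ 2 * ‖a‖ ^ 2 with hgdef
  have e1 : t ^ (2 * s + 2 + n) = t ^ (2 * s + n + 1) * t := by
    rw [← Real.rpow_add_one ht0.ne']; congr 1; ring
  have e2 : g ^ (s + 1) = g ^ s * g := Real.rpow_add_one hg.ne' _
  have e3 : g ^ (s + 2) = g ^ s * g * g := by
    rw [← e2, ← Real.rpow_add_one hg.ne']; congr 1; ring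
  have hT : 0 < 2 * (s + 1) * t ^ (2 * s + n + 1) := by positivity
  have h1 := hinv1 t ht
  rw [add_sub_cancel_right, ← hn, e1, e2] at key
  rw [← hgdef, e2] at h1
  have key2 : ballPotential s (-n / 2) (t • a) = g ^ s * g * ballPotential s (-s - n / 2 - 1) (t • a)
      - g ^ s * (t ^ 2 * ‖a‖ ^ 2) * ballPotential (s + 1) (-s - n / 2 - 1) (t • a) := by
    refine mul_left_cancel₀ hT.ne' ?_
    rw [key]
    push_cast
    ring
  rw [hinv2, h1, key2, e3]
  ring

theorem hasDerivAt_ballPotential_smul {s : ℝ} (hs : -1 < s) (e : ℝ) {a : E} (ha : ‖a‖ < 1) {t : ℝ}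
    (ht : t ∈ Ioo (0 : ℝ) 1) :
    HasDerivAt (fun t : ℝ => ballPotential s e (t • a))
      (e / t * (ballPotential s e (t • a) -
        (1 - t ^ 2 * ‖a‖ ^ 2) * ballPotential s (e - 1) (t • a) -
          t ^ 2 * ‖a‖ ^ 2 * ballPotential (s + 1) (e - 1) (t • a))) t := by
  have ht0 : 0 < t := ht.1
  obtain ⟨M, hM⟩ := exists_kelvinSq_rpow_le ha (e - 1)
  have hlt : ∀ τ ∈ Ioo (0 : ℝ) 1, ‖τ • a‖ < 1 := fun τ hτ => norm_smul_lt_one ha ⟨hτ.1.le, hτ.2.le⟩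
  set k' : ℝ → E → ℝ := fun τ w => -2 * inner ℝ a w + 2 * τ * ‖a‖ ^ 2 * ‖w‖ ^ 2 with hk'
  have hmain := hasDerivAt_integral_of_dominated_loc_of_deriv_le
    (μ := volume.restrict (Metric.ball (0 : E) 1)) (x₀ := t) (s := Ioo 0 1)
    (F := fun τ w => (1 - ‖w‖ ^ 2) ^ s * kelvinSq (τ • a) w ^ e)
    (F' := fun τ w => (1 - ‖w‖ ^ 2) ^ s * (k' τ w * e * kelvinSq (τ • a) w ^ (e - 1)))
    (bound := fun w => (1 - ‖w‖ ^ 2) ^ s * (4 * |e| * M))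
    (Ioo_mem_nhds ht.1 ht.2)
    (.of_forall fun τ => Measurable.aestronglyMeasurable (by fun_prop))
    (integrableOn_ballPotential hs e (hlt t ht))
    (Measurable.aestronglyMeasurable (by fun_prop)) ?_
    ((integrableOn_ball_one_sub_norm_sq_rpow hs).mul_const _) ?_
  · refine hmain.2.congr_deriv (Eq.symm ?_)
    have hi1 := integrableOn_ballPotential hs e (hlt t ht)
    have hi2 := integrableOn_ballPotential hs (e - 1) (hlt t ht)
    have hi3 := integrableOn_ballPotential (s := s + 1) (by linarith) (e - 1) (hlt t ht)
    have hi12 : IntegrableOn (fun w => (1 - ‖w‖ ^ 2) ^ s * kelvinSq (t • a) w ^ e -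
        (1 - t ^ 2 * ‖a‖ ^ 2) * ((1 - ‖w‖ ^ 2) ^ s * kelvinSq (t • a) w ^ (e - 1)))
        (Metric.ball 0 1) := hi1.sub (hi2.const_mul _)
    simp only [ballPotential]
    rw [← integral_const_mul, ← integral_const_mul, ← integral_sub hi1 (hi2.const_mul _),
      ← integral_sub hi12 (hi3.const_mul _), ← integral_const_mul]
    refine setIntegral_congr_fun measurableSet_ball fun w hw => ?_
    have hk := kelvinSq_pos_of_mem_ball (hlt t ht) hw
    have hw1 : 0 < 1 - ‖w‖ ^ 2 := by
      have := mem_ball_zero_iff.1 hw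
      nlinarith [norm_nonneg w]
    have e1 : kelvinSq (t • a) w ^ e = kelvinSq (t • a) w ^ (e - 1) * kelvinSq (t • a) w := by
      rw [← Real.rpow_add_one hk.ne', sub_add_cancel]
    have e2 : kelvinSq (t • a) w = 1 - 2 * t * inner ℝ a w + t ^ 2 * ‖a‖ ^ 2 * ‖w‖ ^ 2 := by
      rw [kelvinSq, inner_smul_left, norm_smul, mul_pow, Real.norm_eq_abs, sq_abs, conj_trivial]
      ring
    have e3 : kelvinSq (t • a) w - (1 - t ^ 2 * ‖a‖ ^ 2) - t ^ 2 * ‖a‖ ^ 2 * (1 - ‖w‖ ^ 2) =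
        t * k' t w := by
      rw [e2, hk']; ring
    simp only [e1, Real.rpow_add_one hw1.ne']
    calc _ = e / t * ((1 - ‖w‖ ^ 2) ^ s * kelvinSq (t • a) w ^ (e - 1) *
        (kelvinSq (t • a) w - (1 - t ^ 2 * ‖a‖ ^ 2) - t ^ 2 * ‖a‖ ^ 2 * (1 - ‖w‖ ^ 2))) := by ring
      _ = _ := by rw [e3]; field_simp
  · refine ae_restrict_of_forall_mem measurableSet_ball fun w hw τ hτ => ?_
    have hw1 := mem_ball_zero_iff.1 hw
    have hk := kelvinSq_pos_of_mem_ball (hlt τ hτ) hw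
    have hb := hM τ ⟨hτ.1.le, hτ.2.le⟩ w hw
    have hpow : 0 ≤ (1 - ‖w‖ ^ 2) ^ s := Real.rpow_nonneg (by nlinarith [norm_nonneg w]) _
    have hk4 : |k' τ w| ≤ 4 := by
      have h1 : |inner ℝ a w| ≤ 1 := (abs_real_inner_le_norm a w).trans
        (mul_le_one₀ ha.le (norm_nonneg w) hw1.le)
      have h2 : τ * (‖a‖ ^ 2 * ‖w‖ ^ 2) ≤ 1 := mul_le_one₀ hτ.2.le (by positivity)
        (mul_le_one₀ (pow_le_one₀ (norm_nonneg a) ha.le) (by positivity)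
          (pow_le_one₀ (norm_nonneg w) hw1.le))
      have h3 : 0 ≤ τ * (‖a‖ ^ 2 * ‖w‖ ^ 2) := by have := hτ.1.le; positivity
      obtain ⟨h4, h5⟩ := abs_le.1 h1
      rw [hk', abs_le]
      constructor <;> simp only <;> nlinarith
    rw [norm_mul, norm_mul, norm_mul, Real.norm_of_nonneg hpow, Real.norm_eq_abs, Real.norm_eq_abs,
      Real.norm_of_nonneg (Real.rpow_nonneg hk.le _)]
    gcongr
  · refine ae_restrict_of_forall_mem measurableSet_ball fun w hw τ hτ => ?_
    have hk := kelvinSq_pos_of_mem_ball (hlt τ hτ) hw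
    have e2 : ∀ σ : ℝ, kelvinSq (σ • a) w =
        1 - 2 * inner ℝ a w * σ + σ ^ 2 * (‖a‖ ^ 2 * ‖w‖ ^ 2) := fun σ => by
      rw [kelvinSq, inner_smul_left, norm_smul, mul_pow, Real.norm_eq_abs, sq_abs, conj_trivial]
      ring
    have h1 := (((hasDerivAt_id τ).const_mul (2 * inner ℝ a w)).const_sub 1).add
      ((hasDerivAt_pow 2 τ).mul_const (‖a‖ ^ 2 * ‖w‖ ^ 2))
    have h2 : HasDerivAt (fun σ : ℝ => kelvinSq (σ • a) w) (k' τ w) τ := by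
      refine (h1.congr_deriv ?_).congr_of_eventuallyEq (.of_forall fun σ => ?_)
      · rw [hk']
        push_cast
        ring
      · simp [e2]
    exact (h2.rpow_const (Or.inl hk.ne')).const_mul _

theorem ballPotential_one_sub_half_finrank {s : ℝ} (hs : -1 < s) {a : E} (ha : ‖a‖ < 1) :
    ballPotential s (1 - (finrank ℝ E : ℝ) / 2) a =
      π ^ ((finrank ℝ E : ℝ) / 2) * Real.Gamma (s + 1) /
        Real.Gamma ((finrank ℝ E : ℝ) / 2 + s + 1) := by
  obtain ⟨c, hc, h⟩ := exists_hasDerivAt_eq_slope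
    (fun t : ℝ => ballPotential s (1 - (finrank ℝ E : ℝ) / 2) (t • a)) (fun _ => 0) zero_lt_one
    (continuousOn_ballPotential_smul hs _ ha) (fun t ht => by
      have h1 := hasDerivAt_ballPotential_smul hs (1 - (finrank ℝ E : ℝ) / 2) ha ht
      refine h1.congr_deriv ?_
      have h2 := ballPotential_one_sub_half_finrank_eq hs ha ht
      rw [show 1 - (finrank ℝ E : ℝ) / 2 - 1 = -(finrank ℝ E : ℝ) / 2 by ring]
      rw [h2]
      ring)
  have h0 : ballPotential s (1 - (finrank ℝ E : ℝ) / 2) (0 : E) =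
      π ^ ((finrank ℝ E : ℝ) / 2) * Real.Gamma (s + 1) /
        Real.Gamma ((finrank ℝ E : ℝ) / 2 + s + 1) := by
    simp only [ballPotential, kelvinSq_zero_left, Real.one_rpow, mul_one]
    exact integral_ball_one_sub_norm_sq_rpow hs
  rw [← h0]
  simp only [one_smul, zero_smul, sub_zero, div_one] at h
  linarith

/-- The `α`-potential over the unit ball of the kernel with exponent `-(α + n) / 2`. -/
theorem ballPotential_neg_add_finrank_div_two {α : ℝ} (hα : 0 < α) {a : E} (ha : ‖a‖ < 1) :
    ballPotential (α / 2 - 1) (-(α + finrank ℝ E) / 2) a =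
      π ^ ((finrank ℝ E : ℝ) / 2) * Real.Gamma (α / 2) /
        Real.Gamma (((finrank ℝ E : ℝ) + α) / 2) * (1 - ‖a‖ ^ 2) ^ (-1 - α / 2) := by
  have hgap : 0 < 1 - ‖a‖ ^ 2 := by nlinarith [norm_nonneg a]
  rw [ballPotential_eq_rpow_mul ha]
  have h := ballPotential_one_sub_half_finrank (s := α / 2 - 1) (by linarith) ha
  rw [show -(α / 2 - 1) - (finrank ℝ E : ℝ) - -(α + (finrank ℝ E : ℝ)) / 2 =
    1 - (finrank ℝ E : ℝ) / 2 by ring, h, mul_comm]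
  congr 2
  · congr 2
    ring
  · congr 1
    ring
  · ring

end Contiguity

section RadialTail

open Module

/-- The radial profile, as a function of `ρ`, of the Green function of the unit ball. -/
noncomputable def radialTail (n α ρ : ℝ) : ENNReal :=
  ∫⁻ t in Ioo ρ 1, ENNReal.ofReal (2 * t ^ (n - 1 - α) * (1 - t ^ 2) ^ (α / 2 - 1))

variable {E : Type*} [NormedAddCommGroup E] [InnerProductSpace ℝ E] [FiniteDimensional ℝ E]
  [MeasurableSpace E] [BorelSpace E]

theorem measurable_lintegral_sphere_kelvinSq (e : ℝ) (a : E) :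
    Measurable fun q : ℝ =>
      ∫⁻ ω, ENNReal.ofReal (kelvinSq (q • a) (ω : E) ^ e) ∂(volume : Measure E).toSphere := by
  refine Measurable.lintegral_prod_right (f := fun q : ℝ => fun ω : Metric.sphere (0 : E) 1 =>
    ENNReal.ofReal (kelvinSq (q • a) (ω : E) ^ e)) ?_
  have : Measurable fun p : ℝ × Metric.sphere (0 : E) 1 => kelvinSq (p.1 • a) (p.2 : E) :=
    (continuous_kelvinSq.comp (by fun_prop : Continuous fun p : ℝ × Metric.sphere (0 : E) 1 =>
      (p.1 • a, (p.2 : E)))).measurable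
  exact (this.pow_const e).ennreal_ofReal

variable [Nontrivial E]

theorem lintegral_ball_radial_mul_kelvinSq {φ : ℝ → ℝ} (hφ : Measurable φ) (e : ℝ) (b : E) :
    ∫⁻ z in Metric.ball (0 : E) 1,
        ENNReal.ofReal (φ ‖z‖) * ENNReal.ofReal (kelvinSq b z ^ e) =
      ∫⁻ q in Ioo (0 : ℝ) 1, ENNReal.ofReal (q ^ ((finrank ℝ E : ℝ) - 1) * φ q) *
        ∫⁻ ω, ENNReal.ofReal (kelvinSq (q • b) (ω : E) ^ e) ∂(volume : Measure E).toSphere := by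
  have hn : 0 < finrank ℝ E := finrank_pos
  rw [← lintegral_indicator measurableSet_ball, lintegral_eq_lintegral_Ioi_sphere _
    (Measurable.indicator (by fun_prop) measurableSet_ball)]
  have hI : Ioi (0 : ℝ) ∩ Ioo 0 1 = Ioo 0 1 := inter_eq_right.2 fun x hx => hx.1
  rw [← hI, inter_comm, ← setLIntegral_indicator measurableSet_Ioo]
  refine setLIntegral_congr_fun measurableSet_Ioi fun q hq => ?_
  have hq : 0 < q := hq
  have hnorm : ∀ ω : Metric.sphere (0 : E) 1, ‖q • (ω : E)‖ = q := fun ω => by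
    simp [norm_smul, abs_of_pos hq]
  have hpow : q ^ (finrank ℝ E - 1) = q ^ ((finrank ℝ E : ℝ) - 1) := by
    rw [← Real.rpow_natCast, Nat.cast_sub hn, Nat.cast_one]
  by_cases h : q < 1
  · simp only [indicator, Metric.mem_ball, dist_zero_right, hnorm, h, hq, mem_Ioo, and_self,
      if_true, kelvinSq_smul_right]
    rw [lintegral_const_mul' _ _ ENNReal.ofReal_ne_top, ← mul_assoc,
      ← ENNReal.ofReal_mul (by positivity), hpow]
  · simp [indicator, hnorm, h]

theorem lintegral_ball_radialTail_mul_kelvinSq_eq {α : ℝ} (hα : 0 < α) (e : ℝ) {a : E}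
    (ha : ‖a‖ < 1) :
    ∫⁻ w in Metric.ball (0 : E) 1, radialTail (finrank ℝ E) α ‖w‖ *
        ENNReal.ofReal (‖w‖ ^ (α - finrank ℝ E) * kelvinSq a w ^ e) =
      ∫⁻ q in Ioo (0 : ℝ) 1, ENNReal.ofReal (2 * q ^ (α - 1) *
        ballPotential (α / 2 - 1) e (q • a)) := by
  set n : ℝ := (finrank ℝ E : ℝ) with hn
  set H : ℝ → ENNReal := fun q =>
    ∫⁻ ω, ENNReal.ofReal (kelvinSq (q • a) (ω : E) ^ e) ∂(volume : Measure E).toSphere with hH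
  have hHm : Measurable H := measurable_lintegral_sphere_kelvinSq e a
  have hinner : ∀ t ∈ Ioo (0 : ℝ) 1, ∫⁻ w in Metric.ball (0 : E) t,
      ENNReal.ofReal (2 * t ^ (n - 1 - α) * (1 - t ^ 2) ^ (α / 2 - 1)) *
        ENNReal.ofReal (‖w‖ ^ (α - n) * kelvinSq a w ^ e) =
      ∫⁻ q in Ioo (0 : ℝ) 1, ENNReal.ofReal (2 * t ^ (n - 1) * (1 - t ^ 2) ^ (α / 2 - 1)) *
        (ENNReal.ofReal (q ^ (α - 1)) * H (t * q)) := by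
    rintro t ⟨ht0, ht1⟩
    have hgap : 0 < 1 - t ^ 2 := by nlinarith
    have h1 : ∫⁻ w in Metric.ball (0 : E) t, ENNReal.ofReal (‖w‖ ^ (α - n) * kelvinSq a w ^ e) =
        ENNReal.ofReal (t ^ α) * ∫⁻ q in Ioo (0 : ℝ) 1, ENNReal.ofReal (q ^ (α - 1)) * H (t * q) := by
      have h2 := lintegral_ball_radial_mul_kelvinSq (φ := fun q => q ^ (α - n)) (by fun_prop) e
        (t • a)
      have h3 : ∀ q ∈ Ioo (0 : ℝ) 1, ENNReal.ofReal (q ^ (α - 1)) * H (t * q) =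
          ENNReal.ofReal (q ^ (n - 1) * q ^ (α - n)) * ∫⁻ ω, ENNReal.ofReal
            (kelvinSq (q • t • a) (ω : E) ^ e) ∂(volume : Measure E).toSphere := by
        rintro q ⟨hq0, -⟩
        rw [← Real.rpow_add hq0, hH]
        simp only [smul_smul]
        rw [mul_comm q t]
        congr 3
        ring
      rw [setLIntegral_congr_fun measurableSet_Ioo h3, ← h2, ← lintegral_indicator measurableSet_ball,
        lintegral_eq_pow_finrank_mul_lintegral_smul _ ht0,
        show α = n + (α - n) by ring, Real.rpow_add ht0, hn, Real.rpow_natCast,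
        ENNReal.ofReal_mul (by positivity), mul_assoc]
      congr 1
      rw [← lintegral_const_mul' _ _ ENNReal.ofReal_ne_top, ← lintegral_indicator measurableSet_ball]
      refine lintegral_congr fun w => ?_
      have hiff : t • w ∈ Metric.ball (0 : E) t ↔ w ∈ Metric.ball (0 : E) 1 := by
        rw [mem_ball_zero_iff, mem_ball_zero_iff, norm_smul, Real.norm_of_nonneg ht0.le,
          mul_lt_iff_lt_one_right ht0]
      by_cases hw : w ∈ Metric.ball (0 : E) 1
      · rw [indicator_of_mem (hiff.2 hw), indicator_of_mem hw, ← ENNReal.ofReal_mul (by positivity),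
          ← ENNReal.ofReal_mul (by positivity), kelvinSq_smul_right, norm_smul,
          Real.norm_of_nonneg ht0.le, Real.mul_rpow ht0.le (norm_nonneg w)]
        congr 1
        ring_nf
      · rw [indicator_of_notMem (fun h => hw (hiff.1 h)), indicator_of_notMem hw]
    rw [lintegral_const_mul' _ _ ENNReal.ofReal_ne_top, h1,
      lintegral_const_mul' _ _ ENNReal.ofReal_ne_top, ← mul_assoc,
      ← ENNReal.ofReal_mul (by positivity)]
    congr 2
    rw [show n - 1 = (n - 1 - α) + α by ring, Real.rpow_add ht0]
    ring_nf
  have houter : ∀ q ∈ Ioo (0 : ℝ) 1, ENNReal.ofReal (2 * q ^ (α - 1) *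
        ballPotential (α / 2 - 1) e (q • a)) = ∫⁻ t in Ioo (0 : ℝ) 1,
      ENNReal.ofReal (2 * t ^ (n - 1) * (1 - t ^ 2) ^ (α / 2 - 1)) *
        (ENNReal.ofReal (q ^ (α - 1)) * H (t * q)) := by
    rintro q ⟨hq0, hq1⟩
    have h2 := lintegral_ball_radial_mul_kelvinSq (φ := fun t => (1 - t ^ 2) ^ (α / 2 - 1))
      (by fun_prop) e (q • a)
    rw [ENNReal.ofReal_mul (by positivity), ofReal_ballPotential (by linarith) e
      (norm_smul_lt_one ha ⟨hq0.le, hq1.le⟩)]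
    have h3 : ∫⁻ w in Metric.ball (0 : E) 1,
        ENNReal.ofReal ((1 - ‖w‖ ^ 2) ^ (α / 2 - 1) * kelvinSq (q • a) w ^ e) =
        ∫⁻ w in Metric.ball (0 : E) 1, ENNReal.ofReal ((1 - ‖w‖ ^ 2) ^ (α / 2 - 1)) *
          ENNReal.ofReal (kelvinSq (q • a) w ^ e) := by
      refine setLIntegral_congr_fun measurableSet_ball fun w hw => ?_
      have := mem_ball_zero_iff.1 hw
      exact ENNReal.ofReal_mul (Real.rpow_nonneg (by nlinarith [norm_nonneg w]) _)
    rw [h3, h2, ← lintegral_const_mul' _ _ ENNReal.ofReal_ne_top]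
    refine setLIntegral_congr_fun measurableSet_Ioo fun t ht => ?_
    have ht0 : 0 < t := ht.1
    have hgap : 0 < 1 - t ^ 2 := by nlinarith [ht.2]
    simp only [smul_smul, hH]
    rw [← mul_assoc, ← mul_assoc, ← ENNReal.ofReal_mul (by positivity),
      ← ENNReal.ofReal_mul (by positivity)]
    congr 2
    ring
  rw [setLIntegral_congr_fun measurableSet_Ioo houter, lintegral_lintegral_swap
    (by fun_prop), ← setLIntegral_congr_fun measurableSet_Ioo hinner,
    ← lintegral_ball_lintegral_Ioo_swap (F := fun w t => ENNReal.ofReal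
    (2 * t ^ (n - 1 - α) * (1 - t ^ 2) ^ (α / 2 - 1)) *
        ENNReal.ofReal (‖w‖ ^ (α - n) * kelvinSq a w ^ e)) (by fun_prop)]
  refine setLIntegral_congr_fun measurableSet_ball fun w hw => ?_
  exact (lintegral_mul_const' _ _ ENNReal.ofReal_ne_top).symm

theorem lintegral_ball_radialTail_mul_kelvinSq {α : ℝ} (hα : 0 < α) {a : E} (ha : ‖a‖ < 1) :
    ∫⁻ w in Metric.ball (0 : E) 1, radialTail (finrank ℝ E) α ‖w‖ *
        ENNReal.ofReal (‖w‖ ^ (α - finrank ℝ E) * kelvinSq a w ^ (-(α + finrank ℝ E) / 2)) =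
      ENNReal.ofReal (2 / α * (π ^ ((finrank ℝ E : ℝ) / 2) * Real.Gamma (α / 2) /
        Real.Gamma (((finrank ℝ E : ℝ) + α) / 2)) * (1 - ‖a‖ ^ 2) ^ (-(α / 2))) := by
  have hn : (0 : ℝ) < finrank ℝ E := by exact_mod_cast (finrank_pos : 0 < finrank ℝ E)
  have g1 : 0 < Real.Gamma (((finrank ℝ E : ℝ) + α) / 2) := Real.Gamma_pos_of_pos (by linarith)
  have g2 : 0 < Real.Gamma (α / 2) := Real.Gamma_pos_of_pos (by linarith)
  set C : ℝ := π ^ ((finrank ℝ E : ℝ) / 2) * Real.Gamma (α / 2) /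
        Real.Gamma (((finrank ℝ E : ℝ) + α) / 2) with hC
  have hCpos : 0 < C := by positivity
  have hgap : ∀ q ∈ Icc (0 : ℝ) 1, 0 < 1 - q ^ 2 * ‖a‖ ^ 2 := fun q hq => by
    have h := norm_smul_lt_one ha hq
    rw [norm_smul, Real.norm_of_nonneg hq.1] at h
    have := mul_nonneg hq.1 (norm_nonneg a)
    rw [← mul_pow]
    nlinarith
  rw [lintegral_ball_radialTail_mul_kelvinSq_eq hα _ ha]
  have h1 : ∀ q ∈ Ioo (0 : ℝ) 1, ENNReal.ofReal (2 * q ^ (α - 1) *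
      ballPotential (α / 2 - 1) (-(α + finrank ℝ E) / 2) (q • a)) =
      ENNReal.ofReal (2 * C * q ^ (α - 1) * (1 - q ^ 2 * ‖a‖ ^ 2) ^ (-1 - α / 2)) := by
    intro q hq
    rw [ballPotential_neg_add_finrank_div_two hα (norm_smul_lt_one ha ⟨hq.1.le, hq.2.le⟩), ← hC,
      norm_smul, mul_pow, Real.norm_eq_abs, sq_abs]
    congr 1
    ring
  rw [setLIntegral_congr_fun measurableSet_Ioo h1, lintegral_Ioo_ofReal_deriv
    (g := fun q => 2 / α * C * (q ^ α * (1 - q ^ 2 * ‖a‖ ^ 2) ^ (-(α / 2)))) zero_le_one]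
  · simp [Real.zero_rpow hα.ne']
  · refine continuousOn_const.mul (ContinuousOn.mul ?_ ?_)
    · exact continuousOn_id.rpow_const fun q _ => Or.inr hα.le
    · exact ContinuousOn.rpow_const (by fun_prop) fun q hq => Or.inl (hgap q hq).ne'
  · intro q hq
    have hq0 : 0 < q := hq.1
    have hg := hgap q ⟨hq.1.le, hq.2.le⟩
    have hd := ((Real.hasDerivAt_rpow_const (p := α) (Or.inl hq0.ne')).mul
      ((((hasDerivAt_pow 2 q).mul_const (‖a‖ ^ 2)).const_sub 1).rpow_const (p := -(α / 2))
        (Or.inl hg.ne'))).const_mul (2 / α * C)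
    refine hd.congr_deriv ?_
    have e1 : (1 - q ^ 2 * ‖a‖ ^ 2) ^ (-(α / 2)) =
        (1 - q ^ 2 * ‖a‖ ^ 2) ^ (-1 - α / 2) * (1 - q ^ 2 * ‖a‖ ^ 2) := by
      rw [← Real.rpow_add_one hg.ne']; congr 1; ring
    have e2 : q ^ α = q ^ (α - 1) * q := by
      rw [← Real.rpow_add_one hq0.ne']; congr 1; ring
    rw [e1, e2, show -(α / 2) - 1 = -1 - α / 2 by ring]
    push_cast
    field_simp
    ring
  · intro q hq
    have hq0 : 0 < q := hq.1
    have hg := hgap q ⟨hq.1.le, hq.2.le⟩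
    positivity

end RadialTail

theorem antitone_radialTail (n α : ℝ) : Antitone (radialTail n α) := fun _ _ h =>
  lintegral_mono_set (Ioo_subset_Ioo_left h)

theorem radialTail_of_one_le (n α : ℝ) {ρ : ℝ} (hρ : 1 ≤ ρ) : radialTail n α ρ = 0 := by
  simp [radialTail, Ioo_eq_empty hρ.not_gt]

theorem integral_Ioo_inv_sq_sub_one (n α : ℝ) {ρ : ℝ} (hρ : 0 < ρ) :
    ∫ u in Ioo (0 : ℝ) ((ρ ^ 2)⁻¹ - 1), (u + 1) ^ (-n / 2) * u ^ (α / 2 - 1) =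
      (radialTail n α ρ).toReal := by
  have himg : (fun t : ℝ => (t ^ 2)⁻¹ - 1) '' Ioo ρ 1 = Ioo (0 : ℝ) ((ρ ^ 2)⁻¹ - 1) := by
    ext u
    constructor
    · rintro ⟨t, ⟨h0, h1⟩, rfl⟩
      have ht : 0 < t := hρ.trans h0
      refine ⟨sub_pos.2 ((one_lt_inv₀ (by positivity)).2 (pow_lt_one₀ ht.le h1 two_ne_zero)), ?_⟩
      have : (t ^ 2)⁻¹ < (ρ ^ 2)⁻¹ := inv_strictAnti₀ (by positivity)
        (pow_lt_pow_left₀ h0 hρ.le two_ne_zero)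
      simpa using this
    · rintro ⟨h0, h1⟩
      have hu : 0 < u + 1 := by linarith
      have hu2 : u + 1 < (ρ ^ 2)⁻¹ := by linarith
      refine ⟨√((u + 1)⁻¹), ⟨?_, ?_⟩, ?_⟩
      · exact Real.lt_sqrt_of_sq_lt ((lt_inv_comm₀ hu (by positivity)).1 hu2)
      · rw [Real.sqrt_lt' one_pos, one_pow]
        exact inv_lt_one_of_one_lt₀ (by linarith)
      · simp only
        rw [Real.sq_sqrt (by positivity), inv_inv, add_sub_cancel_right]
  rw [integral_eq_lintegral_of_nonneg_ae
    (ae_restrict_of_forall_mem measurableSet_Ioo fun u hu => by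
      have h0 : 0 < u := hu.1
      positivity) (Measurable.aestronglyMeasurable (by fun_prop)), ← himg,
    lintegral_image_eq_lintegral_abs_deriv_mul (f' := fun t => -(2 * t) / (t ^ 2) ^ 2)
      measurableSet_Ioo (fun t ht => ?_) ?_, radialTail]
  · congr 1
    refine setLIntegral_congr_fun measurableSet_Ioo fun t ht => ?_
    have ht0 : 0 < t := hρ.trans ht.1
    have hg : 0 < 1 - t ^ 2 := by nlinarith [ht.2]
    have e1 : (t ^ 2)⁻¹ - 1 = (1 - t ^ 2) / t ^ 2 := by field_simp
    have e2 : |-(2 * t) / (t ^ 2) ^ 2| = 2 * t ^ (-3 : ℝ) := by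
      rw [neg_div, abs_neg, abs_of_pos (by positivity), Real.rpow_neg ht0.le]
      norm_cast
      field_simp
    have e3 : ∀ p : ℝ, (t ^ 2) ^ p = t ^ (2 * p) := fun p => by
      rw [← Real.rpow_natCast, ← Real.rpow_mul ht0.le]; norm_cast
    have e4 : t ^ (n - 1 - α) = t ^ (-3 : ℝ) * t ^ n * t ^ (2 - α) := by
      rw [← Real.rpow_add ht0, ← Real.rpow_add ht0]; congr 1; ring
    rw [← ENNReal.ofReal_mul (abs_nonneg _), sub_add_cancel, e1, e2,
      Real.div_rpow hg.le (by positivity), Real.inv_rpow (by positivity), e3, e3, e4,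
      ← Real.rpow_neg ht0.le, div_eq_mul_inv (_ ^ (α / 2 - 1)), ← Real.rpow_neg ht0.le,
      show -(2 * (-n / 2)) = n by ring, show -(2 * (α / 2 - 1)) = 2 - α by ring]
    congr 1
    ring
  · intro t ht t' ht' h
    have h0 : 0 < t := hρ.trans ht.1
    have h0' : 0 < t' := hρ.trans ht'.1
    have h2 : t ^ 2 = t' ^ 2 := inv_injective (by simpa using h)
    exact (sq_eq_sq₀ h0.le h0'.le).1 h2
  · have ht0 : 0 < t := hρ.trans ht.1
    have h := ((hasDerivAt_pow 2 t).fun_inv (by positivity)).sub_const (1 : ℝ)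
    refine (h.congr_deriv ?_).hasDerivWithinAt
    norm_num

section ExteriorBall

open Module EuclideanGeometry

variable {E : Type*} [NormedAddCommGroup E] [InnerProductSpace ℝ E]

theorem norm_sub_inverted_sq {r : ℝ} {x w m : E} (hx : 0 < ‖x‖) (hm0 : m ≠ 0)
    (hm : m = w + (r / ‖x‖ ^ 2) • x) :
    ‖x - ((r * (1 - r ^ 2 / ‖x‖ ^ 2) / ‖m‖ ^ 2) • m + (r ^ 2 / ‖x‖ ^ 2) • x)‖ ^ 2 =
      (1 - r ^ 2 / ‖x‖ ^ 2) ^ 2 * ‖x‖ ^ 2 * ‖w‖ ^ 2 / ‖m‖ ^ 2 := by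
  have hmn : ‖m‖ ≠ 0 := norm_ne_zero_iff.2 hm0
  have hw : w = m - (r / ‖x‖ ^ 2) • x := by rw [hm]; abel
  have h1 : x - ((r * (1 - r ^ 2 / ‖x‖ ^ 2) / ‖m‖ ^ 2) • m + (r ^ 2 / ‖x‖ ^ 2) • x) =
      (1 - r ^ 2 / ‖x‖ ^ 2) • x - (r * (1 - r ^ 2 / ‖x‖ ^ 2) / ‖m‖ ^ 2) • m := by module
  rw [h1, hw, norm_sub_sq_real, norm_sub_sq_real]
  simp only [norm_smul, inner_smul_left, inner_smul_right, conj_trivial, mul_pow, Real.norm_eq_abs,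
    sq_abs, real_inner_comm x m]
  field_simp

theorem norm_inverted_sq_sub {r : ℝ} (hr : 0 < r) {x w m : E} (hx : 0 < ‖x‖) (hm0 : m ≠ 0)
    (hm : m = w + (r / ‖x‖ ^ 2) • x) :
    ‖(r * (1 - r ^ 2 / ‖x‖ ^ 2) / ‖m‖ ^ 2) • m + (r ^ 2 / ‖x‖ ^ 2) • x‖ ^ 2 - r ^ 2 =
      (1 - r ^ 2 / ‖x‖ ^ 2) * r ^ 2 * (1 - ‖w‖ ^ 2) / ‖m‖ ^ 2 := by
  have hmn : ‖m‖ ≠ 0 := norm_ne_zero_iff.2 hm0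
  have hw : w = m - (r / ‖x‖ ^ 2) • x := by rw [hm]; abel
  rw [hw, norm_add_sq_real, norm_sub_sq_real]
  simp only [norm_smul, inner_smul_left, inner_smul_right, conj_trivial, mul_pow, Real.norm_eq_abs,
    sq_abs, real_inner_comm x m]
  field_simp
  ring

theorem exists_kelvinSq_eq_norm_sub_inverted_sq {r : ℝ} (hr : 0 < r) {x v : E} (hv : ‖v‖ < r)
    (hx : r < ‖x‖) :
    ∃ a : E, 1 - ‖a‖ ^ 2 =
        (‖x‖ ^ 2 - r ^ 2) * (r ^ 2 - ‖v‖ ^ 2) / (r ^ 2 * ‖x - v‖ ^ 2) ∧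
      ∀ w m : E, m ≠ 0 → m = w + (r / ‖x‖ ^ 2) • x →
        ‖v - ((r * (1 - r ^ 2 / ‖x‖ ^ 2) / ‖m‖ ^ 2) • m + (r ^ 2 / ‖x‖ ^ 2) • x)‖ ^ 2 =
          ‖x - v‖ ^ 2 * r ^ 2 / ‖x‖ ^ 2 * kelvinSq a w / ‖m‖ ^ 2 := by
  have hx0 : 0 < ‖x‖ := hr.trans hx
  have hxv : 0 < ‖x - v‖ := norm_pos_iff.2 (sub_ne_zero.2 (by rintro rfl; linarith))
  set u : E := v - (r ^ 2 / ‖x‖ ^ 2) • x with hu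
  have hvu : v = u + (r ^ 2 / ‖x‖ ^ 2) • x := by rw [hu]; abel
  set κ : ℝ := ‖x - v‖ ^ 2 * r ^ 2 / ‖x‖ ^ 2 with hκ
  have hκ0 : 0 < κ := by positivity
  have hxu : x - v = (1 - r ^ 2 / ‖x‖ ^ 2) • x - u := by rw [hvu]; module
  have hκu : κ = ‖u‖ ^ 2 * (r ^ 2 / ‖x‖ ^ 2) - 2 * (1 - r ^ 2 / ‖x‖ ^ 2) * (r ^ 2 / ‖x‖ ^ 2) *
      inner ℝ u x + (1 - r ^ 2 / ‖x‖ ^ 2) ^ 2 * r ^ 2 := by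
    rw [hκ, hxu, norm_sub_sq_real]
    simp only [norm_smul, inner_smul_left, conj_trivial, mul_pow, Real.norm_eq_abs, sq_abs,
      real_inner_comm u x]
    field_simp
    ring
  set p : E := (r * (1 - r ^ 2 / ‖x‖ ^ 2)) • u - (‖u‖ ^ 2 * (r / ‖x‖ ^ 2)) • x with hp
  have hpn : ‖p‖ ^ 2 = κ * ‖u‖ ^ 2 := by
    rw [hp, norm_sub_sq_real, hκu]
    simp only [norm_smul, inner_smul_left, inner_smul_right, conj_trivial, mul_pow,
      Real.norm_eq_abs, sq_abs]
    field_simp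
    ring
  have han : ‖κ⁻¹ • p‖ ^ 2 = ‖u‖ ^ 2 / κ := by
    rw [norm_smul, mul_pow, hpn, Real.norm_eq_abs, sq_abs]
    field_simp
  refine ⟨κ⁻¹ • p, ?_, fun w m hm0 hm => ?_⟩
  · rw [han]
    have h1 : ‖v‖ ^ 2 = ‖u‖ ^ 2 + 2 * (r ^ 2 / ‖x‖ ^ 2) * inner ℝ u x + r ^ 4 / ‖x‖ ^ 2 := by
      rw [hvu, norm_add_sq_real]
      simp only [norm_smul, inner_smul_right, mul_pow, Real.norm_eq_abs, sq_abs]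
      field_simp
    have h2 : r ^ 2 * ‖x - v‖ ^ 2 = κ * ‖x‖ ^ 2 := by
      rw [hκ]; field_simp
    have h3 : κ - ‖u‖ ^ 2 = (1 - r ^ 2 / ‖x‖ ^ 2) * (r ^ 2 - ‖v‖ ^ 2) := by
      rw [hκu, h1]
      field_simp
      ring
    rw [h2, one_sub_div hκ0.ne', h3]
    field_simp
  · have hmn : ‖m‖ ≠ 0 := norm_ne_zero_iff.2 hm0
    have h1 : v - ((r * (1 - r ^ 2 / ‖x‖ ^ 2) / ‖m‖ ^ 2) • m + (r ^ 2 / ‖x‖ ^ 2) • x) =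
        u - (r * (1 - r ^ 2 / ‖x‖ ^ 2) / ‖m‖ ^ 2) • m := by rw [hvu]; module
    have h2 : κ * kelvinSq (κ⁻¹ • p) w = κ - 2 * inner ℝ p w + ‖u‖ ^ 2 * ‖w‖ ^ 2 := by
      rw [kelvinSq, han, inner_smul_left, conj_trivial]
      field_simp
    have h3 : ‖m‖ ^ 2 = ‖w‖ ^ 2 + 2 * (r / ‖x‖ ^ 2) * inner ℝ w x + r ^ 2 / ‖x‖ ^ 2 := by
      rw [hm, norm_add_sq_real]
      simp only [norm_smul, inner_smul_right, mul_pow, Real.norm_eq_abs, sq_abs]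
      field_simp
    have h4 : inner ℝ u m = inner ℝ u w + r / ‖x‖ ^ 2 * inner ℝ u x := by
      rw [hm, inner_add_right, inner_smul_right]
    have h5 : inner ℝ p w = r * (1 - r ^ 2 / ‖x‖ ^ 2) * inner ℝ u w -
        ‖u‖ ^ 2 * (r / ‖x‖ ^ 2) * inner ℝ w x := by
      rw [hp, inner_sub_left, inner_smul_left, inner_smul_left, conj_trivial, conj_trivial,
        real_inner_comm w x]
    have h6 : ‖u - (r * (1 - r ^ 2 / ‖x‖ ^ 2) / ‖m‖ ^ 2) • m‖ ^ 2 * ‖m‖ ^ 2 =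
        ‖u‖ ^ 2 * ‖m‖ ^ 2 - 2 * (r * (1 - r ^ 2 / ‖x‖ ^ 2)) * inner ℝ u m +
          (r * (1 - r ^ 2 / ‖x‖ ^ 2)) ^ 2 := by
      rw [norm_sub_sq_real]
      simp only [norm_smul, inner_smul_right, mul_pow, Real.norm_eq_abs, sq_abs]
      field_simp
    rw [h1, h2, eq_div_iff (by positivity), h6, h3, h4, h5, hκu]
    ring

end ExteriorBall

section ExteriorIntegral

open Module EuclideanGeometry

variable {E : Type*} [NormedAddCommGroup E] [InnerProductSpace ℝ E] [FiniteDimensional ℝ E]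
  [MeasurableSpace E] [BorelSpace E] [Nontrivial E]

theorem integral_radialTail_mul_kelvinSq {α : ℝ} (hα : 0 < α) {a : E} (ha : ‖a‖ < 1) :
    ∫ w : E, (radialTail (finrank ℝ E) α ‖w‖).toReal *
        (‖w‖ ^ (α - finrank ℝ E) * kelvinSq a w ^ (-(α + finrank ℝ E) / 2)) =
      2 / α * (π ^ ((finrank ℝ E : ℝ) / 2) * Real.Gamma (α / 2) /
        Real.Gamma (((finrank ℝ E : ℝ) + α) / 2)) * (1 - ‖a‖ ^ 2) ^ (-(α / 2)) := by
  have hn : (0 : ℝ) < finrank ℝ E := by exact_mod_cast (finrank_pos : 0 < finrank ℝ E)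
  have hgap : 0 < 1 - ‖a‖ ^ 2 := by nlinarith [norm_nonneg a]
  have g1 : 0 < Real.Gamma (((finrank ℝ E : ℝ) + α) / 2) := Real.Gamma_pos_of_pos (by linarith)
  have g2 : 0 < Real.Gamma (α / 2) := Real.Gamma_pos_of_pos (by linarith)
  set f : E → ENNReal := fun w => radialTail (finrank ℝ E) α ‖w‖ *
    ENNReal.ofReal (‖w‖ ^ (α - finrank ℝ E) * kelvinSq a w ^ (-(α + finrank ℝ E) / 2)) with hf
  have hfm : Measurable f :=
    ((antitone_radialTail _ _).measurable.comp measurable_norm).mul (by fun_prop)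
  have hout : ∀ w : E, w ∉ Metric.ball (0 : E) 1 → radialTail (finrank ℝ E) α ‖w‖ = 0 := by
    intro w hw
    rw [mem_ball_zero_iff, not_lt] at hw
    exact radialTail_of_one_le _ _ hw
  have hinteg : ∫⁻ w, f w = ENNReal.ofReal (2 / α * (π ^ ((finrank ℝ E : ℝ) / 2) *
      Real.Gamma (α / 2) / Real.Gamma (((finrank ℝ E : ℝ) + α) / 2)) *
        (1 - ‖a‖ ^ 2) ^ (-(α / 2))) := by
    rw [← lintegral_ball_radialTail_mul_kelvinSq hα ha, ← lintegral_indicator measurableSet_ball]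
    refine lintegral_congr fun w => ?_
    by_cases hw : w ∈ Metric.ball (0 : E) 1
    · rw [indicator_of_mem hw]
    · rw [indicator_of_notMem hw, hf]
      simp [hout w hw]
  have htoReal : ∀ w : E, (radialTail (finrank ℝ E) α ‖w‖).toReal *
      (‖w‖ ^ (α - finrank ℝ E) * kelvinSq a w ^ (-(α + finrank ℝ E) / 2)) = (f w).toReal := by
    intro w
    by_cases hw : w ∈ Metric.ball (0 : E) 1
    · have := kelvinSq_pos_of_mem_ball ha hw
      rw [hf, ENNReal.toReal_mul, ENNReal.toReal_ofReal (by positivity)]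
    · simp [hf, hout w hw]
  simp only [htoReal]
  rw [integral_toReal hfm.aemeasurable (ae_lt_top hfm (by rw [hinteg]; exact ENNReal.ofReal_ne_top)),
    hinteg, ENNReal.toReal_ofReal (by positivity)]

theorem integral_norm_gt_riesz_kernel {α r : ℝ} (hα : 0 < α) (hr : 0 < r) {x v : E}
    (hv : ‖v‖ < r) (hx : r < ‖x‖) :
    ∫ y in {y : E | r < ‖y‖},
        (∫ u in Ioo (0 : ℝ) ((‖x‖ ^ 2 - r ^ 2) * (‖y‖ ^ 2 - r ^ 2) / (r ^ 2 * ‖x - y‖ ^ 2)),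
            (u + 1) ^ (-(finrank ℝ E : ℝ) / 2) * u ^ (α / 2 - 1)) *
          ‖x - y‖ ^ (α - (finrank ℝ E : ℝ)) * ‖v - y‖ ^ (-(α + (finrank ℝ E : ℝ))) =
      2 / α * (π ^ ((finrank ℝ E : ℝ) / 2) * Real.Gamma (α / 2) /
        Real.Gamma (((finrank ℝ E : ℝ) + α) / 2)) *
          ((‖x‖ ^ 2 - r ^ 2) ^ (α / 2) /
            ((r ^ 2 - ‖v‖ ^ 2) ^ (α / 2) * ‖x - v‖ ^ finrank ℝ E)) := by
  have hx0 : 0 < ‖x‖ := hr.trans hx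
  have hxv : 0 < ‖x - v‖ := norm_pos_iff.2 (sub_ne_zero.2 (by rintro rfl; linarith))
  have hQ : 0 < ‖x‖ ^ 2 - r ^ 2 := by nlinarith
  have hV : 0 < r ^ 2 - ‖v‖ ^ 2 := by nlinarith [norm_nonneg v]
  set n : ℝ := (finrank ℝ E : ℝ) with hn
  set δ : ℝ := 1 - r ^ 2 / ‖x‖ ^ 2 with hδ
  have hδQ : δ = (‖x‖ ^ 2 - r ^ 2) / ‖x‖ ^ 2 := by rw [hδ]; field_simp
  have hδ0 : 0 < δ := by rw [hδQ]; positivity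
  obtain ⟨a, ha, hva⟩ := exists_kelvinSq_eq_norm_sub_inverted_sq hr hv hx
  have ha1 : ‖a‖ < 1 := by
    have : 0 < 1 - ‖a‖ ^ 2 := by rw [ha]; positivity
    rwa [sub_pos, sq_lt_one_iff₀ (norm_nonneg a)] at this
  rw [setIntegral_eq_integral_of_forall_compl_eq_zero]
  swap
  · intro y hy
    have hy : ‖y‖ ≤ r := not_lt.1 hy
    rw [Ioo_eq_empty, Measure.restrict_empty, integral_zero_measure, zero_mul, zero_mul]
    refine not_lt.2 (div_nonpos_of_nonpos_of_nonneg ?_ (by positivity))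
    exact mul_nonpos_of_nonneg_of_nonpos hQ.le (by nlinarith [norm_nonneg y])
  set c : E := (r ^ 2 / ‖x‖ ^ 2) • x with hc
  set ℓ : ℝ := √(r * δ) with hℓ
  have hℓ0 : 0 < ℓ := Real.sqrt_pos.2 (by positivity)
  have hℓ2 : ℓ ^ 2 = r * δ := Real.sq_sqrt (by positivity)
  rw [integral_eq_integral_inversion c hℓ0.ne',
    ← integral_add_right_eq_self _ ((r / ‖x‖ ^ 2) • x + c)]
  set K : ℝ := (r * δ) ^ n * (δ ^ 2 * ‖x‖ ^ 2) ^ ((α - n) / 2) *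
    (‖x - v‖ ^ 2 * r ^ 2 / ‖x‖ ^ 2) ^ (-(α + n) / 2) with hK
  have hsq : ∀ (z : E) (p : ℝ), ‖z‖ ^ p = (‖z‖ ^ 2) ^ (p / 2) := fun z p => by
    rw [← Real.rpow_natCast, ← Real.rpow_mul (norm_nonneg z)]
    congr 1
    push_cast
    ring
  have hne : ∀ᵐ w : E, w ≠ 0 ∧ w ≠ -((r / ‖x‖ ^ 2) • x) := by
    rw [Filter.eventually_and]
    constructor <;> simp [ae_iff]
  have hpt : ∀ᵐ w : E, (ℓ / dist (w + ((r / ‖x‖ ^ 2) • x + c)) c) ^ (2 * finrank ℝ E) *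
      ((∫ u in Ioo (0 : ℝ) ((‖x‖ ^ 2 - r ^ 2) *
          (‖inversion c ℓ (w + ((r / ‖x‖ ^ 2) • x + c))‖ ^ 2 - r ^ 2) /
            (r ^ 2 * ‖x - inversion c ℓ (w + ((r / ‖x‖ ^ 2) • x + c))‖ ^ 2)),
            (u + 1) ^ (-n / 2) * u ^ (α / 2 - 1)) *
          ‖x - inversion c ℓ (w + ((r / ‖x‖ ^ 2) • x + c))‖ ^ (α - n) *
          ‖v - inversion c ℓ (w + ((r / ‖x‖ ^ 2) • x + c))‖ ^ (-(α + n))) =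
      K * ((radialTail n α ‖w‖).toReal *
        (‖w‖ ^ (α - n) * kelvinSq a w ^ (-(α + n) / 2))) := by
    filter_upwards [hne] with w hw
    obtain ⟨hw0, hwc⟩ := hw
    set m : E := w + (r / ‖x‖ ^ 2) • x with hm
    have hm0 : m ≠ 0 := fun h => hwc (eq_neg_of_add_eq_zero_left h)
    have hmn : 0 < ‖m‖ := norm_pos_iff.2 hm0
    have hwn : 0 < ‖w‖ := norm_pos_iff.2 hw0
    have hdist : dist (w + ((r / ‖x‖ ^ 2) • x + c)) c = ‖m‖ := by
      rw [dist_eq_norm, ← add_assoc, add_sub_cancel_right]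
    have hinv : inversion c ℓ (w + ((r / ‖x‖ ^ 2) • x + c)) = (r * δ / ‖m‖ ^ 2) • m + c := by
      rw [inversion, hdist, div_pow, hℓ2, ← add_assoc, ← hm, vsub_eq_sub,
        add_sub_cancel_right, vadd_eq_add]
    have e1 := norm_sub_inverted_sq hx0 hm0 hm
    have e2 := norm_inverted_sq_sub hr hx0 hm0 hm
    have e3 := hva w m hm0 hm
    rw [← hδ, ← hc] at e1 e2
    have hk : 0 ≤ kelvinSq a w := by
      have : 0 ≤ ‖x - v‖ ^ 2 * r ^ 2 / ‖x‖ ^ 2 * kelvinSq a w / ‖m‖ ^ 2 := by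
        rw [← e3]; positivity
      rw [mul_div_right_comm] at this
      exact nonneg_of_mul_nonneg_right this (by positivity)
    have hζ : (‖x‖ ^ 2 - r ^ 2) * (δ * r ^ 2 * (1 - ‖w‖ ^ 2) / ‖m‖ ^ 2) /
        (r ^ 2 * (δ ^ 2 * ‖x‖ ^ 2 * ‖w‖ ^ 2 / ‖m‖ ^ 2)) = (‖w‖ ^ 2)⁻¹ - 1 := by
      rw [hδQ]
      field_simp
    rw [hdist, hinv, e2, e1, hζ, integral_Ioo_inv_sq_sub_one n α hwn, hsq (x - _), hsq (v - _), e1,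
      e3, hsq w, Real.div_rpow (by positivity) (by positivity),
      Real.mul_rpow (by positivity) (by positivity),
      Real.div_rpow (by positivity) (by positivity), Real.mul_rpow (by positivity) hk,
      pow_mul, div_pow, hℓ2, ← Real.rpow_natCast _ (finrank ℝ E), ← hn,
      Real.div_rpow (by positivity) (by positivity), hK]
    have hM : (‖m‖ ^ 2) ^ n * (‖m‖ ^ 2) ^ ((α - n) / 2) * (‖m‖ ^ 2) ^ (-(α + n) / 2) = 1 := by
      rw [← Real.rpow_add (by positivity), ← Real.rpow_add (by positivity)]
      rw [show n + (α - n) / 2 + -(α + n) / 2 = 0 by ring, Real.rpow_zero]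
    have hM1 : (‖m‖ ^ 2) ^ n ≠ 0 := by positivity
    have hM2 : (‖m‖ ^ 2) ^ ((α - n) / 2) ≠ 0 := by positivity
    have hM3 : (‖m‖ ^ 2) ^ (-(α + n) / 2) ≠ 0 := by positivity
    calc _ = K * ((radialTail n α ‖w‖).toReal * ((‖w‖ ^ 2) ^ ((α - n) / 2) *
          kelvinSq a w ^ (-(α + n) / 2))) /
          ((‖m‖ ^ 2) ^ n * (‖m‖ ^ 2) ^ ((α - n) / 2) * (‖m‖ ^ 2) ^ (-(α + n) / 2)) := by
            rw [hK]
            field_simp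
      _ = _ := by rw [hM, div_one, hK]
  rw [integral_congr_ae hpt, integral_const_mul, hn, integral_radialTail_mul_kelvinSq hα ha1, ← hn,
    ha, mul_left_comm]
  congr 1
  rw [hK, hδQ, ← Real.rpow_natCast _ (finrank ℝ E), ← hn]
  have hX : 0 < ‖x‖ ^ 2 := by positivity
  rw [div_eq_mul_inv _ ((r ^ 2 - ‖v‖ ^ 2) ^ (α / 2) * ‖x - v‖ ^ n), mul_inv,
    ← Real.rpow_neg hV.le, ← Real.rpow_neg hxv.le]
  generalize ‖x‖ ^ 2 - r ^ 2 = Q at *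
  generalize r ^ 2 - ‖v‖ ^ 2 = V at *
  generalize ‖x‖ = X at *
  generalize ‖x - v‖ = D at *
  rw [Real.rpow_def_of_pos (by positivity), Real.rpow_def_of_pos (by positivity),
    Real.rpow_def_of_pos (by positivity), Real.rpow_def_of_pos (by positivity),
    Real.rpow_def_of_pos hQ, Real.rpow_def_of_pos hV, Real.rpow_def_of_pos hxv]
  simp only [← Real.exp_add]
  congr 1
  rw [Real.log_mul (by positivity) (by positivity), Real.log_mul (by positivity) (by positivity),
    Real.log_div (by positivity) (by positivity), Real.log_div (by positivity) (by positivity),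
    Real.log_mul (by positivity) (by positivity),
    Real.log_div (by positivity) (by positivity), Real.log_mul (by positivity) (by positivity),
    Real.log_mul (by positivity) (by positivity)]
  simp only [Real.log_pow]
  rw [Real.log_div (by positivity) (by positivity)]
  simp only [Real.log_pow]
  push_cast
  ring

end ExteriorIntegral

theorem Real.abs_Gamma_neg_div_two {α : ℝ} (hα0 : 0 < α) (hα2 : α < 2) :
    |Real.Gamma (-α / 2)| = 2 / α * Real.Gamma (1 - α / 2) := by
  have h := Real.Gamma_add_one (s := -α / 2) (by linarith)
  have hpos : 0 < Real.Gamma (1 - α / 2) := Real.Gamma_pos_of_pos (by linarith)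
  rw [show -α / 2 + 1 = 1 - α / 2 by ring] at h
  have hΓ : Real.Gamma (-α / 2) = -(2 / α * Real.Gamma (1 - α / 2)) := by
    rw [h]
    field_simp
  rw [hΓ, abs_neg, abs_of_pos (by positivity)]

theorem marginalise_preceding_position_gives_BGR
    (d : ℕ) (hd : 2 ≤ d) (α : ℝ) (hα0 : 0 < α) (hα2 : α < 2)
    (r : ℝ) (hr : 0 < r)
    (x v : EuclideanSpace ℝ (Fin d)) (hv : ‖v‖ < r) (hx : r < ‖x‖) :
    (Real.Gamma (((d : ℝ) + α) / 2) * Real.Gamma ((d : ℝ) / 2) /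
        (π ^ (d : ℝ) * |Real.Gamma (-α / 2)| * Real.Gamma (α / 2) ^ 2)) *
      ∫ y in {y : EuclideanSpace ℝ (Fin d) | r < ‖y‖},
        (∫ u in Ioo (0 : ℝ) ((‖x‖ ^ 2 - r ^ 2) * (‖y‖ ^ 2 - r ^ 2) / (r ^ 2 * ‖x - y‖ ^ 2)),
            (u + 1) ^ (-(d : ℝ) / 2) * u ^ (α / 2 - 1)) *
          ‖x - y‖ ^ (α - (d : ℝ)) * ‖v - y‖ ^ (-(α + (d : ℝ)))
      = π ^ (-((d : ℝ) / 2 + 1)) * Real.Gamma ((d : ℝ) / 2) * Real.sin (π * α / 2) *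
          ((‖x‖ ^ 2 - r ^ 2) ^ (α / 2) /
            ((r ^ 2 - ‖v‖ ^ 2) ^ (α / 2) * ‖x - v‖ ^ d)) := by
  have : Nontrivial (Fin d) := Fin.nontrivial_iff_two_le.2 hd
  have key := integral_norm_gt_riesz_kernel hα0 hr hv hx
  rw [finrank_euclideanSpace_fin] at key
  rw [key, ← mul_assoc, Real.abs_Gamma_neg_div_two hα0 hα2]
  congr 1
  have hd0 : (0 : ℝ) < d := by exact_mod_cast (by lia : 0 < d)
  have g1 : 0 < Real.Gamma (((d : ℝ) + α) / 2) := Real.Gamma_pos_of_pos (by linarith)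
  have g2 : 0 < Real.Gamma (α / 2) := Real.Gamma_pos_of_pos (by linarith)
  have g3 : 0 < Real.Gamma (1 - α / 2) := Real.Gamma_pos_of_pos (by linarith)
  have hsin : 0 < Real.sin (π * α / 2) :=
    Real.sin_pos_of_pos_of_lt_pi (by positivity) (by nlinarith [Real.pi_pos])
  have hrefl := Real.Gamma_mul_Gamma_one_sub (α / 2)
  rw [← mul_div_assoc, eq_div_iff hsin.ne'] at hrefl
  have hπ : π ^ (d : ℝ) = π ^ ((d : ℝ) / 2) * π ^ ((d : ℝ) / 2) := by
    rw [← Real.rpow_add Real.pi_pos, add_halves]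
  rw [hπ, Real.rpow_neg Real.pi_pos.le, Real.rpow_add_one Real.pi_pos.ne']
  generalize Real.Gamma (1 - α / 2) = G at *
  generalize Real.sin (π * α / 2) = s at *
  field_simp
  linear_combination -hrefl
end

section
/- Fix x ∈ ℝ^d with x ≠ 0, and let g : ℝ^d → ℝ be continuous with compact support contained in {z ∈ ℝ^d : |z| > |x|}. For 0 < r < |x| set ζ_r(x,z) = (|x|^2 - r^2)(|z|^2 - r^2)/(r^2 |x - z|^2). Then lim_{r→|x|⁻} [ ∫_{|z|>|x|} g(z) |x - z|^{α-d} ( ∫_0^{ζ_r(x,z)} (u+1)^{-d/2} u^{α/2-1} du ) dz ] / [ ∫_0^{(|x|^2 - r^2)/r^2} (u+1)^{-d/2} u^{α/2-1} du ] = ∫_{|z|>|x|} g(z) |x - z|^{-d} (|z|^2 - |x|^2)^{α/2} dz. (This is the analytic limit underlying Proposition 6.2 on occupation integrals of the radial excursion measure.) -/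
open MeasureTheory Real Set Filter

/-- The incomplete beta-type integral `∫₀ᵗ (u + 1) ^ (-b) u ^ (p - 1) du`. -/
noncomputable def incompleteBeta (b p t : ℝ) : ℝ :=
  ∫ u in Ioo (0 : ℝ) t, (u + 1) ^ (-b) * u ^ (p - 1)

lemma integrableOn_Ioo_rpow_sub_one {p : ℝ} (hp : 0 < p) (t : ℝ) :
    IntegrableOn (fun u : ℝ => u ^ (p - 1)) (Ioo 0 t) := by
  rcases le_or_gt t 0 with ht | ht
  · simp [Ioo_eq_empty_of_le ht]
  · exact (intervalIntegral.integrableOn_Ioo_rpow_iff ht).2 (by linarith)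

lemma setIntegral_Ioo_rpow_sub_one {p t : ℝ} (hp : 0 < p) (ht : 0 ≤ t) :
    ∫ u in Ioo (0 : ℝ) t, u ^ (p - 1) = t ^ p / p := by
  rw [← integral_Ioc_eq_integral_Ioo, ← intervalIntegral.integral_of_le ht,
    integral_rpow (Or.inl (by linarith))]
  simp [Real.zero_rpow hp.ne']

lemma integrableOn_incompleteBeta {b p : ℝ} (hb : 0 ≤ b) (hp : 0 < p) (t : ℝ) :
    IntegrableOn (fun u : ℝ => (u + 1) ^ (-b) * u ^ (p - 1)) (Ioo 0 t) := by
  refine (integrableOn_Ioo_rpow_sub_one hp t).mono' (by fun_prop) ?_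
  refine ae_restrict_of_forall_mem measurableSet_Ioo fun u hu => ?_
  have h0 : 0 ≤ u ^ (p - 1) := rpow_nonneg hu.1.le _
  have h1 : 0 ≤ (u + 1) ^ (-b) := rpow_nonneg (by linarith [hu.1]) _
  have h2 : (u + 1) ^ (-b) ≤ 1 :=
    rpow_le_one_of_one_le_of_nonpos (by linarith [hu.1]) (by linarith)
  rw [Real.norm_of_nonneg (mul_nonneg h1 h0)]
  exact mul_le_of_le_one_left h0 h2

lemma incompleteBeta_nonneg (b p t : ℝ) : 0 ≤ incompleteBeta b p t :=
  setIntegral_nonneg measurableSet_Ioo fun u hu =>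
    mul_nonneg (rpow_nonneg (by linarith [hu.1]) _) (rpow_nonneg hu.1.le _)

lemma incompleteBeta_le {b p t : ℝ} (hb : 0 ≤ b) (hp : 0 < p) (ht : 0 ≤ t) :
    incompleteBeta b p t ≤ t ^ p / p := by
  rw [← setIntegral_Ioo_rpow_sub_one hp ht]
  refine setIntegral_mono_on (integrableOn_incompleteBeta hb hp t)
    (integrableOn_Ioo_rpow_sub_one hp t) measurableSet_Ioo fun u hu => ?_
  exact mul_le_of_le_one_left (rpow_nonneg hu.1.le _)
    (rpow_le_one_of_one_le_of_nonpos (by linarith [hu.1]) (by linarith))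

lemma le_incompleteBeta {b p t : ℝ} (hb : 0 ≤ b) (hp : 0 < p) (ht : 0 ≤ t) :
    (t + 1) ^ (-b) * (t ^ p / p) ≤ incompleteBeta b p t := by
  rw [← setIntegral_Ioo_rpow_sub_one hp ht, ← integral_const_mul]
  refine setIntegral_mono_on ((integrableOn_Ioo_rpow_sub_one hp t).const_mul _)
    (integrableOn_incompleteBeta hb hp t) measurableSet_Ioo fun u hu => ?_
  exact mul_le_mul_of_nonneg_right
    (rpow_le_rpow_of_nonpos (by linarith [hu.1]) (by linarith [hu.2]) (by linarith))
    (rpow_nonneg hu.1.le _)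

lemma monotone_incompleteBeta {b p : ℝ} (hb : 0 ≤ b) (hp : 0 < p) :
    Monotone (incompleteBeta b p) := fun s t hst =>
  setIntegral_mono_set (integrableOn_incompleteBeta hb hp t)
    (ae_restrict_of_forall_mem measurableSet_Ioo fun u hu =>
      mul_nonneg (rpow_nonneg (by linarith [hu.1]) _) (rpow_nonneg hu.1.le _))
    (Ioo_subset_Ioo_right hst).eventuallyLE

lemma tendsto_incompleteBeta_div_rpow {b p : ℝ} (hb : 0 ≤ b) (hp : 0 < p) :
    Tendsto (fun t => incompleteBeta b p t / t ^ p) (nhdsWithin 0 (Ioi 0)) (nhds (1 / p)) := by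
  have hlow : Tendsto (fun t : ℝ => (t + 1) ^ (-b) * (1 / p)) (nhdsWithin 0 (Ioi 0))
      (nhds (1 / p)) := by
    have h : ContinuousAt (fun t : ℝ => (t + 1) ^ (-b) * (1 / p)) 0 :=
      ((continuousAt_id.add continuousAt_const).rpow_const (Or.inl (by simp))).mul
        continuousAt_const
    simpa [ContinuousAt] using h.tendsto.mono_left nhdsWithin_le_nhds
  refine tendsto_of_tendsto_of_tendsto_of_le_of_le' hlow tendsto_const_nhds ?_ ?_
  · filter_upwards [self_mem_nhdsWithin] with t (ht : 0 < t)
    rw [le_div_iff₀ (rpow_pos_of_pos ht p)]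
    exact (le_of_eq (by ring)).trans (le_incompleteBeta hb hp ht.le)
  · filter_upwards [self_mem_nhdsWithin] with t (ht : 0 < t)
    rw [div_le_iff₀ (rpow_pos_of_pos ht p)]
    exact (incompleteBeta_le hb hp ht.le).trans (le_of_eq (by ring))

lemma incompleteBeta_mul_div_le {b p s q : ℝ} (hb : 0 ≤ b) (hp : 0 < p) (hs : 0 < s)
    (hq : 0 ≤ q) :
    incompleteBeta b p (s * q) / incompleteBeta b p s ≤ (s + 1) ^ b * q ^ p := by
  have hsp : 0 < s ^ p := rpow_pos_of_pos hs p
  have hs1 : 0 < (s + 1) ^ b := rpow_pos_of_pos (by linarith) b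
  have hpos : 0 < (s + 1) ^ (-b) * (s ^ p / p) :=
    mul_pos (rpow_pos_of_pos (by linarith) _) (div_pos hsp hp)
  have hlow := le_incompleteBeta hb hp hs.le
  rw [div_le_iff₀ (hpos.trans_le hlow)]
  calc incompleteBeta b p (s * q) ≤ (s * q) ^ p / p :=
        incompleteBeta_le hb hp (mul_nonneg hs.le hq)
    _ = (s + 1) ^ b * q ^ p * ((s + 1) ^ (-b) * (s ^ p / p)) := by
        rw [mul_rpow hs.le hq, rpow_neg (by linarith)]
        field_simp
    _ ≤ _ := mul_le_mul_of_nonneg_left hlow (mul_nonneg hs1.le (rpow_nonneg hq p))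

lemma tendsto_incompleteBeta_mul_div {ι : Type*} {l : Filter ι} {b p q₀ : ℝ} {s q : ι → ℝ}
    (hb : 0 ≤ b) (hp : 0 < p) (hs : Tendsto s l (nhdsWithin 0 (Ioi 0)))
    (hq : Tendsto q l (nhds q₀)) (hq₀ : 0 < q₀) :
    Tendsto (fun i => incompleteBeta b p (s i * q i) / incompleteBeta b p (s i)) l
      (nhds (q₀ ^ p)) := by
  have hs0 : ∀ᶠ i in l, 0 < s i := hs.eventually self_mem_nhdsWithin
  have hqpos : ∀ᶠ i in l, 0 < q i := hq.eventually_const_lt hq₀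
  have hsq : Tendsto (fun i => s i * q i) l (nhdsWithin 0 (Ioi 0)) := by
    refine tendsto_nhdsWithin_iff.2 ⟨?_, ?_⟩
    · simpa using (hs.mono_right nhdsWithin_le_nhds).mul hq
    · filter_upwards [hs0, hqpos] with i h1 h2 using mul_pos h1 h2
  have hF := tendsto_incompleteBeta_div_rpow hb hp
  have h := ((hF.comp hsq).mul (hq.rpow_const (p := p) (Or.inl hq₀.ne'))).div (hF.comp hs)
    (one_div_pos.2 hp).ne'
  rw [mul_div_cancel_left₀ _ (one_div_pos.2 hp).ne'] at h
  refine h.congr' ?_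
  filter_upwards [hs0, hqpos] with i h1 h2
  have h3 : 0 < s i ^ p := rpow_pos_of_pos h1 p
  have h4 : 0 < q i ^ p := rpow_pos_of_pos h2 p
  simp only [Function.comp, Pi.div_apply, mul_rpow h1.le h2.le]
  field_simp

lemma tendsto_sq_sub_sq_div_sq {R : ℝ} (hR : 0 < R) :
    Tendsto (fun r : ℝ => (R ^ 2 - r ^ 2) / r ^ 2) (nhdsWithin R (Ioo 0 R))
      (nhdsWithin 0 (Ioi 0)) := by
  refine tendsto_nhdsWithin_iff.2 ⟨?_, ?_⟩
  · have h : ContinuousAt (fun r : ℝ => (R ^ 2 - r ^ 2) / r ^ 2) R :=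
      ContinuousAt.div (by fun_prop) (by fun_prop) (by positivity)
    simpa [ContinuousAt] using h.tendsto.mono_left nhdsWithin_le_nhds
  · filter_upwards [self_mem_nhdsWithin] with r hr
    have h1 : 0 < r := hr.1
    have h2 : r < R := hr.2
    have h3 : 0 < R ^ 2 - r ^ 2 := by nlinarith
    exact div_pos h3 (by positivity)

theorem excursion_occupation_limit
    (d : ℕ) (hd : 2 ≤ d) (α : ℝ) (hα0 : 0 < α) (hα2 : α < 2)
    (x : EuclideanSpace ℝ (Fin d)) (hx : x ≠ 0)
    (g : EuclideanSpace ℝ (Fin d) → ℝ) (hg : Continuous g)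
    (hgc : HasCompactSupport g)
    (hgs : tsupport g ⊆ {z : EuclideanSpace ℝ (Fin d) | ‖x‖ < ‖z‖}) :
    Tendsto (fun r : ℝ =>
        (∫ z in {z : EuclideanSpace ℝ (Fin d) | ‖x‖ < ‖z‖},
            g z * ‖x - z‖ ^ (α - (d : ℝ)) *
              ∫ u in Ioo (0 : ℝ)
                  ((‖x‖ ^ 2 - r ^ 2) * (‖z‖ ^ 2 - r ^ 2) / (r ^ 2 * ‖x - z‖ ^ 2)),
                (u + 1) ^ (-(d : ℝ) / 2) * u ^ (α / 2 - 1)) /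
          (∫ u in Ioo (0 : ℝ) ((‖x‖ ^ 2 - r ^ 2) / r ^ 2),
            (u + 1) ^ (-(d : ℝ) / 2) * u ^ (α / 2 - 1)))
      (nhdsWithin ‖x‖ (Ioo 0 ‖x‖))
      (nhds (∫ z in {z : EuclideanSpace ℝ (Fin d) | ‖x‖ < ‖z‖},
        g z * ‖x - z‖ ^ (-(d : ℝ)) * (‖z‖ ^ 2 - ‖x‖ ^ 2) ^ (α / 2))) := by
  have hR : 0 < ‖x‖ := norm_pos_iff.2 hx
  have hb : (0 : ℝ) ≤ (d : ℝ) / 2 := by positivity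
  have hp : 0 < α / 2 := by linarith
  set S : Set (EuclideanSpace ℝ (Fin d)) := {z | ‖x‖ < ‖z‖} with hS
  have hSm : MeasurableSet S := measurableSet_lt measurable_const measurable_norm
  have hne : ∀ z ∈ S, 0 < ‖x - z‖ := fun z hz => norm_pos_iff.2 fun h => by
    rw [sub_eq_zero] at h
    exact absurd hz (by simp [hS, h])
  set F := incompleteBeta ((d : ℝ) / 2) (α / 2) with hF
  have hs := tendsto_sq_sub_sq_div_sq hR
  have hζ : ∀ (r : ℝ) (z : EuclideanSpace ℝ (Fin d)),
      (‖x‖ ^ 2 - r ^ 2) * (‖z‖ ^ 2 - r ^ 2) / (r ^ 2 * ‖x - z‖ ^ 2) =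
        (‖x‖ ^ 2 - r ^ 2) / r ^ 2 * ((‖z‖ ^ 2 - r ^ 2) / ‖x - z‖ ^ 2) := fun r z =>
    (div_mul_div_comm _ _ _ _).symm
  have hgoal : (fun r : ℝ =>
      (∫ z in S, g z * ‖x - z‖ ^ (α - (d : ℝ)) *
        ∫ u in Ioo (0 : ℝ)
            ((‖x‖ ^ 2 - r ^ 2) * (‖z‖ ^ 2 - r ^ 2) / (r ^ 2 * ‖x - z‖ ^ 2)),
          (u + 1) ^ (-(d : ℝ) / 2) * u ^ (α / 2 - 1)) /
      (∫ u in Ioo (0 : ℝ) ((‖x‖ ^ 2 - r ^ 2) / r ^ 2),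
        (u + 1) ^ (-(d : ℝ) / 2) * u ^ (α / 2 - 1))) =
      fun r : ℝ => ∫ z in S, g z * ‖x - z‖ ^ (α - (d : ℝ)) *
        (F ((‖x‖ ^ 2 - r ^ 2) / r ^ 2 * ((‖z‖ ^ 2 - r ^ 2) / ‖x - z‖ ^ 2)) /
          F ((‖x‖ ^ 2 - r ^ 2) / r ^ 2)) := by
    funext r
    simp only [hζ, neg_div, hF, incompleteBeta, ← mul_div_assoc, integral_div]
  rw [hgoal]
  have hbound : Integrable (fun z => g z * (‖x - z‖ ^ (α - (d : ℝ)) *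
      (4 ^ ((d : ℝ) / 2) * (‖z‖ ^ 2 / ‖x - z‖ ^ 2) ^ (α / 2)))) := by
    refine Continuous.integrable_of_hasCompactSupport ?_ hgc.mul_right
    refine continuous_of_tsupport fun z hz => ?_
    have hxz : 0 < ‖x - z‖ := hne z (hgs (tsupport_mul_subset_left hz))
    have hdist : ContinuousAt (fun z => ‖x - z‖) z := by fun_prop
    have hquot : ContinuousAt (fun z => ‖z‖ ^ 2 / ‖x - z‖ ^ 2) z :=
      ContinuousAt.div (by fun_prop) (by fun_prop) (by positivity)
    exact hg.continuousAt.mul ((hdist.rpow_const (Or.inl hxz.ne')).mul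
      (continuousAt_const.mul (hquot.rpow_const (Or.inr hp.le))))
  refine tendsto_integral_filter_of_dominated_convergence _ ?_ ?_ hbound.norm.restrict ?_
  · refine Eventually.of_forall fun r => ?_
    have hFm : Measurable F := (monotone_incompleteBeta hb hp).measurable
    have hFc : Measurable fun z : EuclideanSpace ℝ (Fin d) =>
        F ((‖x‖ ^ 2 - r ^ 2) / r ^ 2 * ((‖z‖ ^ 2 - r ^ 2) / ‖x - z‖ ^ 2)) :=
      hFm.comp (by fun_prop)
    have hgm : Measurable g := hg.measurable
    have hxm : Measurable fun z : EuclideanSpace ℝ (Fin d) => ‖x - z‖ ^ (α - (d : ℝ)) := by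
      fun_prop
    exact ((hgm.mul hxm).mul (hFc.div_const _)).aestronglyMeasurable
  · have hs3 : ∀ᶠ r in nhdsWithin ‖x‖ (Ioo 0 ‖x‖), (‖x‖ ^ 2 - r ^ 2) / r ^ 2 < 3 :=
      (hs.mono_right nhdsWithin_le_nhds).eventually_lt_const (by norm_num)
    filter_upwards [hs3, hs.eventually self_mem_nhdsWithin, self_mem_nhdsWithin]
      with r h3 h0 hr
    refine ae_restrict_of_forall_mem hSm fun z hz => ?_
    replace h0 : 0 < (‖x‖ ^ 2 - r ^ 2) / r ^ 2 := h0
    have hz' : ‖x‖ < ‖z‖ := hz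
    have hxz : 0 < ‖x - z‖ := hne z hz
    have hq : 0 ≤ (‖z‖ ^ 2 - r ^ 2) / ‖x - z‖ ^ 2 :=
      div_nonneg (by nlinarith [hr.1, hr.2]) (by positivity)
    rw [mul_assoc, norm_mul, norm_mul (g z), norm_mul, norm_mul (‖x - z‖ ^ (α - (d : ℝ)))]
    refine mul_le_mul_of_nonneg_left (mul_le_mul_of_nonneg_left ?_ (norm_nonneg _))
      (norm_nonneg _)
    rw [Real.norm_of_nonneg (div_nonneg (incompleteBeta_nonneg _ _ _)
      (incompleteBeta_nonneg _ _ _)), Real.norm_of_nonneg (by positivity)]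
    refine (incompleteBeta_mul_div_le hb hp h0 hq).trans ?_
    gcongr
    · linarith
    · nlinarith [sq_nonneg r]
  · refine ae_restrict_of_forall_mem hSm fun z hz => ?_
    have hz' : ‖x‖ < ‖z‖ := hz
    have hxz : 0 < ‖x - z‖ := hne z hz
    have hpos : 0 < ‖z‖ ^ 2 - ‖x‖ ^ 2 := by nlinarith
    have hq : Tendsto (fun r : ℝ => (‖z‖ ^ 2 - r ^ 2) / ‖x - z‖ ^ 2)
        (nhdsWithin ‖x‖ (Ioo 0 ‖x‖)) (nhds ((‖z‖ ^ 2 - ‖x‖ ^ 2) / ‖x - z‖ ^ 2)) :=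
      (Continuous.tendsto (by fun_prop) _).mono_left nhdsWithin_le_nhds
    have h := (tendsto_incompleteBeta_mul_div hb hp hs hq (by positivity)).const_mul
      (g z * ‖x - z‖ ^ (α - (d : ℝ)))
    convert h using 2
    rw [div_rpow hpos.le (by positivity), ← rpow_natCast ‖x - z‖ 2, ← rpow_mul hxz.le,
      sub_eq_add_neg α, rpow_add hxz]
    have h2 : ((2 : ℕ) : ℝ) * (α / 2) = α := by push_cast; ring
    rw [h2]
    have h3 : 0 < ‖x - z‖ ^ α := rpow_pos_of_pos hxz α
    field_simp
end

section
/- Fix x ∈ ℝ^d with x ≠ 0 and 0 < r₀ < |x|, and let f : ℝ^d → ℝ be continuous with support contained in the closed ball {y : |y| ≤ r₀}. Then lim_{r→|x|⁻} [ (|x|^2 - r^2)^{α/2} ∫_{|y|<r} (r^2 - |y|^2)^{-α/2} |x - y|^{-d} f(y) dy ] / [ ∫_0^{(|x|^2 - r^2)/r^2} (u+1)^{-d/2} u^{α/2-1} du ] = (α/2) |x|^α ∫_{|y|<|x|} (|x|^2 - |y|^2)^{-α/2} |x - y|^{-d} f(y) dy. (This is the analytic limit underlying Proposition 5.1 on the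 excursion overshoot measure.) -/
open MeasureTheory Real Set Filter

/-- The integral of `u ^ (a - 1)` against a weight `(u + 1) ^ (-b)`, which tends to `1` at the
origin, is asymptotic to `ε ^ a / a` as `ε` decreases to `0`. -/
theorem tendsto_rpow_div_integral_add_one_rpow {a b : ℝ} (ha : 0 < a) (hb : 0 ≤ b) :
    Tendsto (fun ε : ℝ => ε ^ a / ∫ u in Ioo (0 : ℝ) ε, (u + 1) ^ (-b) * u ^ (a - 1))
      (nhdsWithin 0 (Ioi 0)) (nhds a) := by
  have hupper : Tendsto (fun ε : ℝ => a * (ε + 1) ^ b) (nhdsWithin 0 (Ioi 0)) (nhds a) := by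
    have h : ContinuousAt (fun ε : ℝ => a * (ε + 1) ^ b) 0 := by
      refine continuousAt_const.mul (ContinuousAt.rpow_const (by fun_prop) (Or.inl (by norm_num)))
    have h' := h.tendsto
    simp only [zero_add, one_rpow, mul_one] at h'
    exact h'.mono_left nhdsWithin_le_nhds
  have hbounds : ∀ ε : ℝ, 0 < ε →
      (ε + 1) ^ (-b) * (ε ^ a / a) ≤ ∫ u in Ioo (0 : ℝ) ε, (u + 1) ^ (-b) * u ^ (a - 1) ∧
      ∫ u in Ioo (0 : ℝ) ε, (u + 1) ^ (-b) * u ^ (a - 1) ≤ ε ^ a / a := by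
    intro ε hε
    have hint : IntegrableOn (fun u : ℝ => u ^ (a - 1)) (Ioo 0 ε) := by
      rw [intervalIntegral.integrableOn_Ioo_rpow_iff hε]
      linarith
    have hval : ∫ u in Ioo (0 : ℝ) ε, u ^ (a - 1) = ε ^ a / a := by
      rw [← integral_Ioc_eq_integral_Ioo, ← intervalIntegral.integral_of_le hε.le,
        integral_rpow (Or.inl (by linarith))]
      simp [zero_rpow ha.ne']
    have hle : ∀ u ∈ Ioo (0 : ℝ) ε, (u + 1) ^ (-b) * u ^ (a - 1) ≤ u ^ (a - 1) := by
      intro u hu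
      refine mul_le_of_le_one_left (rpow_nonneg hu.1.le _) ?_
      exact rpow_le_one_of_one_le_of_nonpos (by linarith [hu.1]) (by linarith)
    have hge : ∀ u ∈ Ioo (0 : ℝ) ε,
        (ε + 1) ^ (-b) * u ^ (a - 1) ≤ (u + 1) ^ (-b) * u ^ (a - 1) := by
      intro u hu
      refine mul_le_mul_of_nonneg_right ?_ (rpow_nonneg hu.1.le _)
      exact rpow_le_rpow_of_nonpos (by linarith [hu.1]) (by linarith [hu.2]) (by linarith)
    have hint' : IntegrableOn (fun u : ℝ => (u + 1) ^ (-b) * u ^ (a - 1)) (Ioo 0 ε) := by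
      refine Integrable.mono' hint (by fun_prop) ?_
      refine (ae_restrict_iff' measurableSet_Ioo).2 (Eventually.of_forall fun u hu => ?_)
      rw [norm_of_nonneg (mul_nonneg (rpow_nonneg (by linarith [hu.1]) _)
        (rpow_nonneg hu.1.le _))]
      exact hle u hu
    rw [← hval]
    refine ⟨?_, setIntegral_mono_on hint' hint measurableSet_Ioo hle⟩
    rw [← integral_const_mul]
    exact setIntegral_mono_on (hint.const_mul _) hint' measurableSet_Ioo hge
  refine tendsto_of_tendsto_of_tendsto_of_le_of_le' tendsto_const_nhds hupper ?_ ?_ <;>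
    filter_upwards [self_mem_nhdsWithin] with ε hε
  all_goals
    have hε : 0 < ε := hε
    obtain ⟨h₁, h₂⟩ := hbounds ε hε
    have hpos : 0 < ε ^ a := rpow_pos_of_pos hε a
    have hpos' : 0 < (ε + 1) ^ (-b) := rpow_pos_of_pos (by linarith) _
    have hI := (mul_pos hpos' (div_pos hpos ha)).trans_le h₁
  · rw [le_div_iff₀ hI]
    rwa [le_div_iff₀ ha, mul_comm] at h₂
  · rw [div_le_iff₀ hI]
    calc ε ^ a = a * (ε + 1) ^ b * ((ε + 1) ^ (-b) * (ε ^ a / a)) := by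
          rw [rpow_neg (by linarith)]
          have := (rpow_pos_of_pos (by linarith : 0 < ε + 1) b).ne'
          field_simp
      _ ≤ _ := by
          refine mul_le_mul_of_nonneg_left h₁ (mul_nonneg ha.le (rpow_nonneg (by linarith) _))

/-- For a continuous function `g` on a closed ball of radius `r₀ < R`, extended by zero, the
integrals of `(r ^ 2 - ‖y‖ ^ 2) ^ (-a) * g y` over the balls of radius `r` are left continuous at
`R`. -/
theorem tendsto_setIntegral_sq_sub_norm_sq_rpow {E : Type*} [NormedAddCommGroup E]
    [ProperSpace E] [MeasurableSpace E] [BorelSpace E] {μ : Measure E}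
    [IsFiniteMeasureOnCompacts μ] {a r₀ R : ℝ} (ha : 0 ≤ a) (hr₀ : 0 ≤ r₀) (hR : r₀ < R)
    {g : E → ℝ} (hg : ContinuousOn g (Metric.closedBall 0 r₀))
    (hgs : Function.support g ⊆ Metric.closedBall 0 r₀) :
    Tendsto (fun r : ℝ => ∫ y in {y : E | ‖y‖ < r}, (r ^ 2 - ‖y‖ ^ 2) ^ (-a) * g y ∂μ)
      (nhdsWithin R (Iio R))
      (nhds (∫ y in {y : E | ‖y‖ < R}, (R ^ 2 - ‖y‖ ^ 2) ^ (-a) * g y ∂μ)) := by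
  have hball : ∀ r, r₀ < r → ∫ y in {y : E | ‖y‖ < r}, (r ^ 2 - ‖y‖ ^ 2) ^ (-a) * g y ∂μ =
      ∫ y in Metric.closedBall 0 r₀, (r ^ 2 - ‖y‖ ^ 2) ^ (-a) * g y ∂μ := by
    intro r hr
    refine setIntegral_eq_of_subset_of_forall_sdiff_eq_zero
      (measurableSet_lt measurable_norm measurable_const) ?_ ?_
    · intro y hy
      exact (mem_closedBall_zero_iff.1 hy).trans_lt hr
    · intro y hy
      rw [Function.notMem_support.1 fun h => hy.2 (hgs h), mul_zero]
  obtain ⟨r₁, hr₁, hr₁R⟩ := exists_between hR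
  have hmeas : MeasurableSet (Metric.closedBall (0 : E) r₀) :=
    Metric.isClosed_closedBall.measurableSet
  have hcompact : IsCompact (Metric.closedBall (0 : E) r₀) := isCompact_closedBall 0 r₀
  have hev : ∀ᶠ r in nhdsWithin R (Iio R), r₁ < r :=
    nhdsWithin_le_nhds (lt_mem_nhds hr₁R)
  have hsub : ∀ r, r₁ ≤ r → ∀ y ∈ Metric.closedBall (0 : E) r₀,
      0 < r₁ ^ 2 - r₀ ^ 2 ∧ r₁ ^ 2 - r₀ ^ 2 ≤ r ^ 2 - ‖y‖ ^ 2 := by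
    intro r hr y hy
    have hy := mem_closedBall_zero_iff.1 hy
    constructor
    · nlinarith
    · nlinarith [norm_nonneg y]
  rw [hball R hR]
  refine Tendsto.congr' (f₁ := fun r : ℝ =>
    ∫ y in Metric.closedBall 0 r₀, (r ^ 2 - ‖y‖ ^ 2) ^ (-a) * g y ∂μ) ?_ ?_
  · filter_upwards [hev] with r hr using (hball r (hr₁.trans hr)).symm
  refine tendsto_integral_filter_of_dominated_convergence
    (fun y => (r₁ ^ 2 - r₀ ^ 2) ^ (-a) * ‖g y‖) ?_ ?_ ?_ ?_
  · filter_upwards [hev] with r hr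
    refine ContinuousOn.aestronglyMeasurable ?_ hmeas
    refine ContinuousOn.mul (ContinuousOn.rpow_const (by fun_prop) fun y hy => Or.inl ?_) hg
    obtain ⟨h₁, h₂⟩ := hsub r hr.le y hy
    exact (h₁.trans_le h₂).ne'
  · filter_upwards [hev] with r hr
    refine (ae_restrict_iff' hmeas).2 (Eventually.of_forall fun y hy => ?_)
    obtain ⟨h₁, h₂⟩ := hsub r hr.le y hy
    rw [norm_mul, norm_of_nonneg (rpow_nonneg (h₁.le.trans h₂) _)]
    exact mul_le_mul_of_nonneg_right (rpow_le_rpow_of_nonpos h₁ h₂ (by linarith)) (norm_nonneg _)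
  · exact (continuousOn_const.mul hg.norm).integrableOn_compact hcompact
  · refine (ae_restrict_iff' hmeas).2 (Eventually.of_forall fun y hy => ?_)
    obtain ⟨h₁, h₂⟩ := hsub R hr₁R.le y hy
    have h : ContinuousAt (fun r : ℝ => (r ^ 2 - ‖y‖ ^ 2) ^ (-a) * g y) R := by
      refine ContinuousAt.mul (ContinuousAt.rpow_const (by fun_prop) (Or.inl ?_)) continuousAt_const
      exact (h₁.trans_le h₂).ne'
    exact h.tendsto.mono_left nhdsWithin_le_nhds

theorem excursion_overshoot_limit
    (d : ℕ) (hd : 2 ≤ d) (α : ℝ) (hα0 : 0 < α) (hα2 : α < 2)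
    (x : EuclideanSpace ℝ (Fin d)) (hx : x ≠ 0)
    (r₀ : ℝ) (hr₀ : 0 < r₀) (hr₀x : r₀ < ‖x‖)
    (f : EuclideanSpace ℝ (Fin d) → ℝ) (hf : Continuous f)
    (hfs : Function.support f ⊆ Metric.closedBall 0 r₀) :
    Tendsto (fun r : ℝ =>
        ((‖x‖ ^ 2 - r ^ 2) ^ (α / 2) *
            ∫ y in {y : EuclideanSpace ℝ (Fin d) | ‖y‖ < r},
              (r ^ 2 - ‖y‖ ^ 2) ^ (-(α / 2)) * ‖x - y‖ ^ (-(d : ℝ)) * f y) /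
          (∫ u in Ioo (0 : ℝ) ((‖x‖ ^ 2 - r ^ 2) / r ^ 2),
            (u + 1) ^ (-(d : ℝ) / 2) * u ^ (α / 2 - 1)))
      (nhdsWithin ‖x‖ (Ioo 0 ‖x‖))
      (nhds ((α / 2) * ‖x‖ ^ α *
        ∫ y in {y : EuclideanSpace ℝ (Fin d) | ‖y‖ < ‖x‖},
          (‖x‖ ^ 2 - ‖y‖ ^ 2) ^ (-(α / 2)) * ‖x - y‖ ^ (-(d : ℝ)) * f y)) := by
  have hx0 : 0 < ‖x‖ := norm_pos_iff.2 hx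
  simp only [mul_assoc _ (‖x - _‖ ^ (-(d : ℝ))) (f _), neg_div]
  have hg : ContinuousOn (fun y => ‖x - y‖ ^ (-(d : ℝ)) * f y) (Metric.closedBall 0 r₀) := by
    refine ContinuousOn.mul (ContinuousOn.rpow_const (by fun_prop) fun y hy => Or.inl ?_)
      hf.continuousOn
    rw [norm_ne_zero_iff, sub_ne_zero]
    rintro rfl
    exact absurd (mem_closedBall_zero_iff.1 hy) hr₀x.not_ge
  have hI := (tendsto_setIntegral_sq_sub_norm_sq_rpow (μ := volume) (by positivity : 0 ≤ α / 2)
    hr₀.le hr₀x hg ((Function.support_mul_subset_right _ _).trans hfs)).mono_left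
      (nhdsWithin_mono _ (Ioo_subset_Iio_self (a := 0)))
  have hε : Tendsto (fun r : ℝ => (‖x‖ ^ 2 - r ^ 2) / r ^ 2) (nhdsWithin ‖x‖ (Ioo 0 ‖x‖))
      (nhdsWithin 0 (Ioi 0)) := by
    refine tendsto_nhdsWithin_iff.2 ⟨?_, ?_⟩
    · have h : ContinuousAt (fun r : ℝ => (‖x‖ ^ 2 - r ^ 2) / r ^ 2) ‖x‖ :=
        ContinuousAt.div (by fun_prop) (by fun_prop) (by positivity)
      have h' := h.tendsto
      simp only [sub_self, zero_div] at h'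
      exact h'.mono_left nhdsWithin_le_nhds
    · filter_upwards [self_mem_nhdsWithin] with r hr
      have hr0 : 0 < r := hr.1
      have hsq : r ^ 2 < ‖x‖ ^ 2 := by nlinarith [hr.2]
      exact div_pos (sub_pos.2 hsq) (pow_pos hr0 2)
  have hratio := (tendsto_rpow_div_integral_add_one_rpow (by positivity : 0 < α / 2)
    (by positivity : 0 ≤ (d : ℝ) / 2)).comp hε
  have hpow : Tendsto (fun r : ℝ => r ^ α) (nhdsWithin ‖x‖ (Ioo 0 ‖x‖)) (nhds (‖x‖ ^ α)) :=
    (continuousAt_rpow_const _ _ (Or.inl hx0.ne')).tendsto.mono_left nhdsWithin_le_nhds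
  refine ((hratio.mul hpow).mul hI).congr' ?_
  filter_upwards [self_mem_nhdsWithin] with r hr
  have hr0 : 0 < r := hr.1
  have hsq : r ^ 2 ≤ ‖x‖ ^ 2 := by nlinarith [hr.2]
  have hrα : (r ^ 2) ^ (α / 2) = r ^ α := by
    rw [← rpow_natCast_mul hr0.le]
    congr 1
    push_cast
    ring
  have hrα0 : r ^ α ≠ 0 := (rpow_pos_of_pos hr0 α).ne'
  rw [Function.comp_apply, div_rpow (by linarith) (by positivity), hrα]
  field_simp
end

section
/- Let σ₁ denote the surface measure on the unit sphere 𝕊_{d-1} = {x ∈ ℝ^d : |x| = 1} normalised to have total mass 1. For every real γ ≥ 0, ∫_{𝕊_{d-1}} ( ∫_{|w|<1} |w|^{2γ} (1 - |w|^2)^{α/2} |φ - w|^{-d} dw ) σ₁(dφ) = π^{d/2} Γ(α/2) Γ(γ + d/2) / ( Γ(d/2) Γ(γ + (d+α)/2) ). Consequently the probability measure on the unit ball with density w ↦ π^{-d/2} (Γ((d+α)/2)/Γ(α/2)) ∫_{𝕊_{d-1}} (1-|w|^2)^{α/2} |φ - w|^{-d} σ₁(dφ) (the stationary distribution of Theorem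 1.10) has radial part whose square is Beta((d)/2, α/2)-distributed. -/
open MeasureTheory Real Set

/-- The surface measure on the unit sphere of `ℝ^d`, normalised to have total mass `1`. -/
noncomputable def normalisedSphereMeasure (d : ℕ) :
    Measure (Metric.sphere (0 : EuclideanSpace ℝ (Fin d)) 1) :=
  ((volume : Measure (EuclideanSpace ℝ (Fin d))).toSphere univ)⁻¹ •
    (volume : Measure (EuclideanSpace ℝ (Fin d))).toSphere

open scoped ENNReal

section Polar

variable {E : Type*} [NormedAddCommGroup E] [NormedSpace ℝ E] [FiniteDimensional ℝ E]
  [Nontrivial E] [MeasurableSpace E] [BorelSpace E] (μ : Measure E) [μ.IsAddHaarMeasure]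

/-- Integration in polar coordinates. -/
lemma lintegral_eq_lintegral_toSphere_Ioi {f : E → ℝ≥0∞} (hf : Measurable f) :
    ∫⁻ x, f x ∂μ = ∫⁻ θ : Metric.sphere (0 : E) 1, ∫⁻ s in Ioi (0 : ℝ),
      ENNReal.ofReal (s ^ (Module.finrank ℝ E - 1)) * f (s • (θ : E)) ∂volume ∂μ.toSphere := by
  have hpres := μ.measurePreserving_homeomorphUnitSphereProd
  have hsymm : ∀ x : ({0}ᶜ : Set E), f x =
      f ((homeomorphUnitSphereProd E x).2.1 • ((homeomorphUnitSphereProd E x).1 : E)) := by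
    intro x
    rw [← homeomorphUnitSphereProd_symm_apply_coe, Homeomorph.symm_apply_apply]
  have hmeas : Measurable fun p : Metric.sphere (0 : E) 1 × Ioi (0 : ℝ) ↦
      f ((p.2 : ℝ) • (p.1 : E)) := by fun_prop
  calc ∫⁻ x, f x ∂μ = ∫⁻ x : ({0}ᶜ : Set E), f x ∂(μ.comap (↑)) := by
        rw [lintegral_subtype_comap (measurableSet_singleton _).compl, restrict_compl_singleton]
    _ = ∫⁻ p, f ((p.2 : ℝ) • (p.1 : E))
          ∂(μ.toSphere.prod (.volumeIoiPow (Module.finrank ℝ E - 1))) := by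
        simp_rw [hsymm]
        exact hpres.lintegral_comp hmeas
    _ = _ := by
        rw [lintegral_prod _ hmeas.aemeasurable]
        refine lintegral_congr fun θ ↦ ?_
        rw [Measure.volumeIoiPow, lintegral_withDensity_eq_lintegral_mul _ (by fun_prop)
          (by fun_prop)]
        exact lintegral_subtype_comap measurableSet_Ioi
          (fun s : ℝ ↦ ENNReal.ofReal (s ^ (Module.finrank ℝ E - 1)) * f (s • (θ : E)))

/-- Change of variables under the reciprocal on `(0, 1)`. -/
lemma lintegral_Ioo_zero_one_eq_lintegral_Ioi_inv (g : ℝ → ℝ≥0∞) :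
    ∫⁻ r in Ioo (0 : ℝ) 1, g r = ∫⁻ s in Ioi (1 : ℝ), ENNReal.ofReal ((s ^ 2)⁻¹) * g s⁻¹ := by
  have himage : (fun s : ℝ ↦ s⁻¹) '' Ioi 1 = Ioo 0 1 := by
    simp [image_inv_eq_inv, inv_Ioi₀]
  rw [← himage, lintegral_image_eq_lintegral_abs_deriv_mul measurableSet_Ioi
    (fun x hx ↦ (hasDerivAt_inv (by have := mem_Ioi.1 hx; positivity)).hasDerivWithinAt)
    inv_injective.injOn]
  simp [abs_neg]

/-- Change of variables under the inversion in the unit sphere. -/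
lemma setLIntegral_norm_lt_one_eq_inversion {f : E → ℝ≥0∞} (hf : Measurable f) :
    ∫⁻ w in {w : E | ‖w‖ < 1}, f w ∂μ = ∫⁻ x in {x : E | 1 < ‖x‖},
      ENNReal.ofReal ((‖x‖ ^ (2 * Module.finrank ℝ E))⁻¹) * f ((‖x‖ ^ 2)⁻¹ • x) ∂μ := by
  have hlt : MeasurableSet {w : E | ‖w‖ < 1} := measurableSet_lt measurable_norm measurable_const
  have hgt : MeasurableSet {x : E | 1 < ‖x‖} := measurableSet_lt measurable_const measurable_norm
  rw [← lintegral_indicator hlt, ← lintegral_indicator hgt,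
    lintegral_eq_lintegral_toSphere_Ioi μ (hf.indicator hlt),
    lintegral_eq_lintegral_toSphere_Ioi μ (Measurable.indicator (by fun_prop) hgt)]
  refine lintegral_congr fun θ ↦ ?_
  have hθ : ‖(θ : E)‖ = 1 := norm_eq_of_mem_sphere θ
  have hn : 0 < Module.finrank ℝ E := Module.finrank_pos
  set n := Module.finrank ℝ E
  calc _ = ∫⁻ s in Ioo (0 : ℝ) 1, ENNReal.ofReal (s ^ (n - 1)) * f (s • (θ : E)) := by
        rw [← lintegral_indicator measurableSet_Ioi, ← lintegral_indicator measurableSet_Ioo]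
        refine lintegral_congr fun s ↦ ?_
        by_cases h0 : 0 < s <;> by_cases h1 : s < 1 <;>
          simp [indicator, norm_smul, hθ, h0, h1, abs_of_pos]
    _ = ∫⁻ s in Ioi (1 : ℝ), ENNReal.ofReal ((s ^ 2)⁻¹) *
          (ENNReal.ofReal (s⁻¹ ^ (n - 1)) * f (s⁻¹ • (θ : E))) :=
        lintegral_Ioo_zero_one_eq_lintegral_Ioi_inv _
    _ = _ := by
        rw [← lintegral_indicator measurableSet_Ioi, ← lintegral_indicator measurableSet_Ioi]
        refine lintegral_congr fun s ↦ ?_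
        by_cases h1 : 1 < s
        · have h0 : 0 < s := by linarith
          have hpow : (s ^ 2)⁻¹ * s⁻¹ ^ (n - 1) = s ^ (n - 1) * (s ^ (2 * n))⁻¹ := by
            obtain ⟨m, hm⟩ : ∃ m, n = m + 1 := ⟨n - 1, by omega⟩
            rw [hm, Nat.add_sub_cancel, inv_pow]
            field_simp
            ring
          have hs : (s ^ 2)⁻¹ * s = s⁻¹ := by field_simp
          simp only [indicator, mem_Ioi, mem_ofPred_eq, norm_smul, norm_eq_abs, abs_of_pos h0, hθ,
            mul_one, h0, h1, if_true, smul_smul, hs]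
          rw [← mul_assoc, ← mul_assoc, ← ENNReal.ofReal_mul (by positivity),
            ← ENNReal.ofReal_mul (by positivity), hpow]
        · by_cases h0 : 0 < s <;> simp [indicator, norm_smul, hθ, h0, h1, abs_of_pos]

end Polar

/-- Completing the square: the quadratics `s ^ 2 ± 2 * a * s` jointly cover the half-line. -/
lemma lintegral_Ioi_inv_mul_add_quadratic (a : ℝ) {F : ℝ → ℝ≥0∞} (hF : Measurable F) :
    ∫⁻ s in Ioi (0 : ℝ), ENNReal.ofReal s⁻¹ *
      ((ENNReal.ofReal (s ^ 2 + 2 * a * s) * F (s ^ 2 + 2 * a * s)) +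
        (ENNReal.ofReal (s ^ 2 - 2 * a * s) * F (s ^ 2 - 2 * a * s))) =
      ∫⁻ q in Ioi (0 : ℝ), F q := by
  wlog ha : 0 ≤ a generalizing a
  · rw [← this (-a) (by linarith)]
    refine lintegral_congr fun s ↦ ?_
    rw [add_comm]
    congr 2 <;> ring_nf
  have hplus : ∀ s ∈ Ioi (0 : ℝ), ENNReal.ofReal s⁻¹ *
      (ENNReal.ofReal (s ^ 2 + 2 * a * s) * F (s ^ 2 + 2 * a * s)) =
      ENNReal.ofReal (s + 2 * a) * F (s ^ 2 + 2 * a * s) := by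
    intro s hs
    rw [mem_Ioi] at hs
    rw [← mul_assoc, ← ENNReal.ofReal_mul (by positivity)]
    congr 2
    field_simp
  have hminus : ∫⁻ s in Ioi (0 : ℝ), ENNReal.ofReal s⁻¹ *
      (ENNReal.ofReal (s ^ 2 - 2 * a * s) * F (s ^ 2 - 2 * a * s)) =
      ∫⁻ s in Ioi (0 : ℝ), ENNReal.ofReal s * F (s ^ 2 + 2 * a * s) := by
    rw [← lintegral_indicator measurableSet_Ioi, ← lintegral_indicator measurableSet_Ioi,
      ← lintegral_add_right_eq_self _ (2 * a)]
    refine lintegral_congr fun s ↦ ?_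
    by_cases h0 : 0 < s
    · have h1 : 0 < s + 2 * a := by linarith
      simp only [indicator, mem_Ioi, h0, h1, if_true]
      rw [← mul_assoc, ← ENNReal.ofReal_mul (by positivity)]
      congr 2
      · field_simp
        ring
      · ring
    · by_cases h1 : 0 < s + 2 * a
      · have h2 : (s + 2 * a) ^ 2 - 2 * a * (s + 2 * a) ≤ 0 := by nlinarith
        simp [indicator, h0, ENNReal.ofReal_of_nonpos h2]
      · simp [indicator, h0, h1]
  have himage : (fun s : ℝ ↦ s ^ 2 + 2 * a * s) '' Ioi 0 = Ioi 0 := by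
    ext q
    simp only [mem_image, mem_Ioi]
    constructor
    · rintro ⟨s, hs, rfl⟩
      positivity
    · intro hq
      have hlt : a < √(a ^ 2 + q) := Real.lt_sqrt_of_sq_lt (by linarith)
      refine ⟨√(a ^ 2 + q) - a, by linarith, ?_⟩
      have := Real.sq_sqrt (show 0 ≤ a ^ 2 + q by positivity)
      linear_combination this
  have hinj : InjOn (fun s : ℝ ↦ s ^ 2 + 2 * a * s) (Ioi 0) := by
    intro s hs t ht hst
    simp only [mem_Ioi] at hs ht hst
    have : (s - t) * (s + t + 2 * a) = 0 := by linear_combination hst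
    rcases mul_eq_zero.1 this with h | h <;> linarith
  have hderiv : ∀ s ∈ Ioi (0 : ℝ),
      HasDerivWithinAt (fun s : ℝ ↦ s ^ 2 + 2 * a * s) (2 * s + 2 * a) (Ioi 0) s := by
    intro s _
    convert! (((hasDerivAt_id s).pow 2).add
      ((hasDerivAt_id s).const_mul (2 * a))).hasDerivWithinAt using 1
    simp
  simp_rw [mul_add]
  rw [lintegral_add_left (by fun_prop), setLIntegral_congr_fun measurableSet_Ioi hplus, hminus,
    ← lintegral_add_left (by fun_prop)]
  conv_rhs =>
    rw [← himage, lintegral_image_eq_lintegral_abs_deriv_mul measurableSet_Ioi hderiv hinj]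
  refine setLIntegral_congr_fun measurableSet_Ioi fun s hs ↦ ?_
  rw [mem_Ioi] at hs
  rw [← add_mul, ← ENNReal.ofReal_add (by positivity) hs.le, abs_of_pos (by positivity)]
  ring_nf

section Poisson

variable {E : Type*} [NormedAddCommGroup E] [InnerProductSpace ℝ E] [FiniteDimensional ℝ E]
  [Nontrivial E] [MeasurableSpace E] [BorelSpace E] (μ : Measure E) [μ.IsAddHaarMeasure]

/-- Integral of a radial function against the Poisson kernel of the exterior of the unit ball. -/
lemma lintegral_poissonKernel_mul_radial {e : E} (he : ‖e‖ = 1) {F : ℝ → ℝ≥0∞}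
    (hF : Measurable F) :
    ∫⁻ x, ENNReal.ofReal ((‖x - e‖ ^ Module.finrank ℝ E)⁻¹) *
      (ENNReal.ofReal (‖x‖ ^ 2 - 1) * F (‖x‖ ^ 2 - 1)) ∂μ =
      μ.toSphere univ / 2 * ∫⁻ q in Ioi (0 : ℝ), F q := by
  have hn : 0 < Module.finrank ℝ E := Module.finrank_pos
  set n := Module.finrank ℝ E with hndef
  set G : E → ℝ≥0∞ := fun x ↦ ENNReal.ofReal (‖x‖ ^ 2 - 1) * F (‖x‖ ^ 2 - 1) with hG
  have hGm : Measurable G := by fun_prop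
  have hplus : ∫⁻ x, ENNReal.ofReal ((‖x - e‖ ^ n)⁻¹) * G x ∂μ =
      ∫⁻ y, ENNReal.ofReal ((‖y‖ ^ n)⁻¹) * G (e + y) ∂μ := by
    rw [← lintegral_add_left_eq_self _ e]
    simp
  have hminus : ∫⁻ x, ENNReal.ofReal ((‖x - e‖ ^ n)⁻¹) * G x ∂μ =
      ∫⁻ y, ENNReal.ofReal ((‖y‖ ^ n)⁻¹) * G (e - y) ∂μ := by
    rw [← lintegral_sub_left_eq_self _ e]
    simp
  have htwo : 2 * ∫⁻ x, ENNReal.ofReal ((‖x - e‖ ^ n)⁻¹) * G x ∂μ =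
      μ.toSphere univ * ∫⁻ q in Ioi (0 : ℝ), F q := by
    rw [two_mul]
    nth_rw 1 [hplus]
    rw [hminus, ← lintegral_add_left (by fun_prop),
      lintegral_eq_lintegral_toSphere_Ioi μ (by fun_prop), mul_comm, ← lintegral_const]
    refine lintegral_congr fun θ ↦ ?_
    have hθ : ‖(θ : E)‖ = 1 := norm_eq_of_mem_sphere θ
    rw [← lintegral_Ioi_inv_mul_add_quadratic (inner ℝ e (θ : E)) hF]
    refine setLIntegral_congr_fun measurableSet_Ioi fun s hs ↦ ?_
    rw [mem_Ioi] at hs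
    have hadd : ‖e + s • (θ : E)‖ ^ 2 - 1 = s ^ 2 + 2 * inner ℝ e (θ : E) * s := by
      rw [norm_add_sq_real, inner_smul_right, norm_smul, he, hθ, norm_eq_abs, mul_one, sq_abs]
      ring
    have hsub : ‖e - s • (θ : E)‖ ^ 2 - 1 = s ^ 2 - 2 * inner ℝ e (θ : E) * s := by
      rw [norm_sub_sq_real, inner_smul_right, norm_smul, he, hθ, norm_eq_abs, mul_one, sq_abs]
      ring
    have hpow : s ^ (n - 1) * (s ^ n)⁻¹ = s⁻¹ := by
      obtain ⟨m, hm⟩ : ∃ m, n = m + 1 := ⟨n - 1, by omega⟩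
      rw [hm, Nat.add_sub_cancel]
      field_simp
      ring
    simp only [hG, hadd, hsub]
    rw [← mul_add, ← mul_assoc, ← hndef, ← ENNReal.ofReal_mul (by positivity), norm_smul, hθ,
      norm_eq_abs, abs_of_pos hs, mul_one, hpow]
  rw [ENNReal.mul_div_right_comm.symm, ← htwo, ENNReal.mul_div_right_comm,
    ENNReal.div_self (by simp) (by simp), one_mul]

end Poisson

/-- The beta integral of the second kind. -/
lemma lintegral_Ioi_rpow_mul_one_add_rpow {a b : ℝ} (ha : 0 < a) (hb : 0 < b) :
    ∫⁻ q in Ioi (0 : ℝ), ENNReal.ofReal (q ^ (a - 1) * (1 + q) ^ (-(a + b))) =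
      ENNReal.ofReal (ProbabilityTheory.beta a b) := by
  have himage : (fun t : ℝ ↦ t / (1 - t)) '' Ioo 0 1 = Ioi 0 := by
    ext q
    simp only [mem_image, mem_Ioi, mem_Ioo]
    constructor
    · rintro ⟨t, ⟨h0, h1⟩, rfl⟩
      exact div_pos h0 (by linarith)
    · intro hq
      refine ⟨q / (1 + q), ⟨by positivity, by rw [div_lt_one (by positivity)]; linarith⟩, ?_⟩
      have : 1 - q / (1 + q) = 1 / (1 + q) := by field_simp; ring
      rw [this]
      field_simp
  have hinj : InjOn (fun t : ℝ ↦ t / (1 - t)) (Ioo 0 1) := by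
    rintro s ⟨_, hs⟩ t ⟨_, ht⟩ hst
    have h1 : 1 - s ≠ 0 := by linarith
    have h2 : 1 - t ≠ 0 := by linarith
    simp only at hst
    rw [div_eq_div_iff h1 h2] at hst
    linarith
  have hderiv : ∀ t ∈ Ioo (0 : ℝ) 1,
      HasDerivWithinAt (fun t : ℝ ↦ t / (1 - t)) (((1 - t) ^ 2)⁻¹) (Ioo 0 1) t := by
    rintro t ⟨_, ht⟩
    have h1 : 1 - t ≠ 0 := by linarith
    convert! ((hasDerivAt_id t).div ((hasDerivAt_id t).const_sub 1) h1).hasDerivWithinAt using 1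
    simp only [id]
    field_simp
    ring
  have hbeta := ProbabilityTheory.beta_pos ha hb
  have hone := ProbabilityTheory.lintegral_betaPDF_eq_one ha hb
  rw [ProbabilityTheory.lintegral_betaPDF] at hone
  rw [← himage, lintegral_image_eq_lintegral_abs_deriv_mul measurableSet_Ioo hderiv hinj,
    ← mul_one (ENNReal.ofReal (ProbabilityTheory.beta a b)), ← hone,
    ← lintegral_const_mul _ (by fun_prop)]
  refine setLIntegral_congr_fun measurableSet_Ioo ?_
  rintro t ⟨h0, h1⟩
  have hpos : 0 < 1 - t := by linarith
  simp only
  rw [← ENNReal.ofReal_mul (by positivity), ← ENNReal.ofReal_mul hbeta.le]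
  congr 1
  have hadd : 1 + t / (1 - t) = (1 - t)⁻¹ := by field_simp; ring
  have hexp : ((1 - t) ^ 2)⁻¹ * ((1 - t) ^ (a - 1))⁻¹ * (1 - t) ^ (a + b) = (1 - t) ^ (b - 1) := by
    rw [← rpow_natCast, ← rpow_neg hpos.le, ← rpow_neg hpos.le, ← rpow_add hpos, ← rpow_add hpos]
    congr 1
    push_cast
    ring
  rw [abs_of_pos (by positivity), hadd, div_rpow h0.le hpos.le, inv_rpow hpos.le,
    rpow_neg hpos.le, inv_inv, ← hexp]
  field_simp

/-- The integrand of the moments after inversion in the unit sphere. -/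
lemma inversion_moment_integrand {E : Type*} [NormedAddCommGroup E] [InnerProductSpace ℝ E]
    (d : ℕ) (α γ : ℝ) {e x : E} (he : ‖e‖ = 1) (hx : 1 < ‖x‖) :
    (‖x‖ ^ (2 * d))⁻¹ * (‖(‖x‖ ^ 2)⁻¹ • x‖ ^ (2 * γ) * (1 - ‖(‖x‖ ^ 2)⁻¹ • x‖ ^ 2) ^ (α / 2) *
        ‖e - (‖x‖ ^ 2)⁻¹ • x‖ ^ (-(d : ℝ))) =
      (‖x - e‖ ^ d)⁻¹ * ((‖x‖ ^ 2 - 1) * ((‖x‖ ^ 2 - 1) ^ (α / 2 - 1) *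
        (1 + (‖x‖ ^ 2 - 1)) ^ (-(α / 2 + (γ + (d : ℝ) / 2))))) := by
  set r := ‖x‖ with hr
  have h0 : 0 < r := by linarith
  have hq : 0 < r ^ 2 - 1 := by nlinarith
  have hnorm : ‖(r ^ 2)⁻¹ • x‖ = r⁻¹ := by
    rw [norm_smul, ← hr, norm_eq_abs, abs_of_pos (by positivity)]
    field_simp
  have hxe : 0 < ‖x - e‖ := by
    rw [norm_sub_pos_iff]
    rintro rfl
    linarith
  have hdist : ‖e - (r ^ 2)⁻¹ • x‖ = ‖x - e‖ / r := by
    rw [← sq_eq_sq₀ (norm_nonneg _) (by positivity), div_pow, norm_sub_sq_real, norm_sub_sq_real,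
      inner_smul_right, hnorm, he, ← hr, real_inner_comm e x]
    field_simp
  have hone : 1 - r⁻¹ ^ 2 = (r ^ 2 - 1) / r ^ 2 := by field_simp
  have hmul : (r ^ 2 - 1) * (r ^ 2 - 1) ^ (α / 2 - 1) = (r ^ 2 - 1) ^ (α / 2) := by
    rw [mul_comm, ← rpow_add_one hq.ne', sub_add_cancel]
  have hexp : (r ^ (2 * d))⁻¹ * (r ^ (2 * γ))⁻¹ * (r ^ α)⁻¹ * r ^ d =
      r ^ (-(α + 2 * γ + d)) := by
    rw [← rpow_natCast, ← rpow_natCast, ← rpow_neg h0.le, ← rpow_neg h0.le, ← rpow_neg h0.le,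
      ← rpow_add h0, ← rpow_add h0, ← rpow_add h0]
    congr 1
    push_cast
    ring
  have hsq : ∀ y : ℝ, (r ^ 2) ^ y = r ^ (2 * y) := fun y ↦ by
    rw [rpow_mul h0.le, rpow_two]
  rw [hnorm, hdist, hone, div_rpow hq.le (by positivity), inv_rpow h0.le, hsq, ← mul_assoc (_ - _),
    hmul, add_sub_cancel, hsq, show 2 * (α / 2) = α by ring,
    show 2 * -(α / 2 + (γ + (d : ℝ) / 2)) = -(α + 2 * γ + d) by ring, ← hexp,
    rpow_neg (by positivity), rpow_natCast, div_pow]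
  field_simp

/-- Moments of the unaveraged density at a point of the unit sphere. -/
lemma setLIntegral_moment_integrand (d : ℕ) (hd : 2 ≤ d) {α γ : ℝ} (hα : 0 < α) (hγ : 0 ≤ γ)
    {e : EuclideanSpace ℝ (Fin d)} (he : ‖e‖ = 1) :
    ∫⁻ w in {w : EuclideanSpace ℝ (Fin d) | ‖w‖ < 1}, ENNReal.ofReal
        (‖w‖ ^ (2 * γ) * (1 - ‖w‖ ^ 2) ^ (α / 2) * ‖e - w‖ ^ (-(d : ℝ))) =
      (volume : Measure (EuclideanSpace ℝ (Fin d))).toSphere univ / 2 *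
        ENNReal.ofReal (ProbabilityTheory.beta (α / 2) (γ + (d : ℝ) / 2)) := by
  have : Nontrivial (EuclideanSpace ℝ (Fin d)) :=
    Module.nontrivial_of_finrank_pos (R := ℝ) (by simp; omega)
  have hgt : MeasurableSet {x : EuclideanSpace ℝ (Fin d) | 1 < ‖x‖} :=
    measurableSet_lt measurable_const measurable_norm
  rw [setLIntegral_norm_lt_one_eq_inversion _ (by fun_prop),
    ← lintegral_Ioi_rpow_mul_one_add_rpow (by positivity) (by positivity),
    ← lintegral_poissonKernel_mul_radial _ he (by fun_prop), ← lintegral_indicator hgt]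
  refine lintegral_congr fun x ↦ ?_
  simp only [finrank_euclideanSpace, Fintype.card_fin]
  by_cases hx : 1 < ‖x‖
  · have hq : 0 ≤ ‖x‖ ^ 2 - 1 := by nlinarith
    rw [indicator_of_mem (by exact hx), ← ENNReal.ofReal_mul (by positivity),
      ← ENNReal.ofReal_mul hq, ← ENNReal.ofReal_mul (by positivity),
      inversion_moment_integrand d α γ he hx]
  · have hq : ‖x‖ ^ 2 - 1 ≤ 0 := by nlinarith [norm_nonneg x]
    rw [indicator_of_notMem (by exact hx), ENNReal.ofReal_of_nonpos hq]
    simp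

/-- The surface area of the unit sphere. -/
lemma toSphere_real_univ_euclideanSpace (d : ℕ) (hd : 2 ≤ d) :
    (volume : Measure (EuclideanSpace ℝ (Fin d))).toSphere.real univ =
      2 * π ^ ((d : ℝ) / 2) / Real.Gamma ((d : ℝ) / 2) := by
  have : Nonempty (Fin d) := ⟨⟨0, by omega⟩⟩
  have hd0 : (0 : ℝ) < d := by positivity
  have hGamma : Real.Gamma ((d : ℝ) / 2) ≠ 0 := (Real.Gamma_pos_of_pos (by positivity)).ne'
  rw [Measure.toSphere_real_apply_univ, measureReal_def, EuclideanSpace.volume_ball]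
  simp only [finrank_euclideanSpace, Fintype.card_fin, ENNReal.ofReal_one, one_pow, one_mul]
  rw [ENNReal.toReal_ofReal (by positivity), Real.Gamma_add_one (by positivity),
    Real.sqrt_eq_rpow, ← rpow_mul_natCast pi_pos.le, show 1 / 2 * (d : ℝ) = d / 2 by ring]
  field_simp

lemma isProbabilityMeasure_normalisedSphereMeasure (d : ℕ) (hd : 2 ≤ d) :
    IsProbabilityMeasure (normalisedSphereMeasure d) := by
  have : Nontrivial (EuclideanSpace ℝ (Fin d)) :=
    Module.nontrivial_of_finrank_pos (R := ℝ) (by simp; omega)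
  refine ⟨?_⟩
  rw [normalisedSphereMeasure, Measure.smul_apply, smul_eq_mul]
  exact ENNReal.inv_mul_cancel (Measure.measure_univ_ne_zero.2 (Measure.toSphere_ne_zero _))
    (measure_ne_top _ _)

theorem stationary_distribution_moments
    (d : ℕ) (hd : 2 ≤ d) (α : ℝ) (hα0 : 0 < α) (hα2 : α < 2)
    (γ : ℝ) (hγ : 0 ≤ γ) :
    ∫ φ : Metric.sphere (0 : EuclideanSpace ℝ (Fin d)) 1,
        (∫ w in {w : EuclideanSpace ℝ (Fin d) | ‖w‖ < 1},
          ‖w‖ ^ (2 * γ) * (1 - ‖w‖ ^ 2) ^ (α / 2) * ‖(φ : EuclideanSpace ℝ (Fin d)) - w‖ ^ (-(d : ℝ)))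
        ∂(normalisedSphereMeasure d)
      = π ^ ((d : ℝ) / 2) * Real.Gamma (α / 2) * Real.Gamma (γ + (d : ℝ) / 2) /
          (Real.Gamma ((d : ℝ) / 2) * Real.Gamma (γ + ((d : ℝ) + α) / 2)) := by
  have := isProbabilityMeasure_normalisedSphereMeasure d hd
  have hinner : ∀ φ : Metric.sphere (0 : EuclideanSpace ℝ (Fin d)) 1,
      ∫ w in {w : EuclideanSpace ℝ (Fin d) | ‖w‖ < 1},
        ‖w‖ ^ (2 * γ) * (1 - ‖w‖ ^ 2) ^ (α / 2) *
          ‖(φ : EuclideanSpace ℝ (Fin d)) - w‖ ^ (-(d : ℝ)) =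
      π ^ ((d : ℝ) / 2) * Real.Gamma (α / 2) * Real.Gamma (γ + (d : ℝ) / 2) /
          (Real.Gamma ((d : ℝ) / 2) * Real.Gamma (γ + ((d : ℝ) + α) / 2)) := by
    intro φ
    have hlt : MeasurableSet {w : EuclideanSpace ℝ (Fin d) | ‖w‖ < 1} :=
      measurableSet_lt measurable_norm measurable_const
    have hd0 : (0 : ℝ) < d := by positivity
    rw [integral_eq_lintegral_of_nonneg_ae, setLIntegral_moment_integrand d hd hα0 hγ
      (norm_eq_of_mem_sphere φ), ENNReal.toReal_mul, ENNReal.toReal_div, ← measureReal_def,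
      toSphere_real_univ_euclideanSpace d hd,
      ENNReal.toReal_ofReal (ProbabilityTheory.beta_pos (by positivity) (by positivity)).le,
      ProbabilityTheory.beta, show α / 2 + (γ + (d : ℝ) / 2) = γ + ((d : ℝ) + α) / 2 by ring]
    · simp only [ENNReal.toReal_ofNat]
      field_simp
    · refine (ae_restrict_iff' hlt).2 (.of_forall fun w hw ↦ ?_)
      have hw1 : ‖w‖ < 1 := hw
      have : 0 ≤ 1 - ‖w‖ ^ 2 := by nlinarith [norm_nonneg w]
      simp only [Pi.zero_apply]
      positivity
    · exact Measurable.aestronglyMeasurable (by fun_prop)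
  simp_rw [hinner]
  simp
end

section
/- Let θ ∈ ℝ^d with |θ| = 1, let λ ∈ ℝ, and let f : {x ∈ ℝ^d : |x| = 1} → ℝ be bounded and measurable. Then both of the following complex-valued integrals converge absolutely and are equal: ∫_{0<|y|<1} |y|^{iλ - α} (1 - |y|^2)^{α/2} |θ - y|^{-d} f(y/|y|) dy = ∫_{|w|>1} |w|^{-iλ - d} (|w|^2 - 1)^{α/2} |θ - w|^{-d} f(w/|w|) dw, where |y|^{iλ} = exp(iλ log|y|). (This change-of-variables identity via inversion through the unit sphere is the relation ρ̂_{iλ}[f](θ) = ρ_{iλ + d - α}[f](θ) between the ascending and descending ladder potential operators used in the proof of the deep Wiener–Hopf factorisation, Theorem 1.9.) -/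
open MeasureTheory Real Set Complex

open EuclideanGeometry (inversion)

section Inversion

variable {E : Type*} [NormedAddCommGroup E] [InnerProductSpace ℝ E]

lemma norm_inversion_zero_one (y : E) : ‖inversion 0 1 y‖ = ‖y‖⁻¹ := by
  simpa using EuclideanGeometry.dist_inversion_center (0 : E) y 1

lemma inv_norm_smul_inversion_zero_one (y : E) :
    ‖inversion 0 1 y‖⁻¹ • inversion 0 1 y = ‖y‖⁻¹ • y := by
  rcases eq_or_ne y 0 with rfl | hy
  · simp
  have hn : ‖y‖ ≠ 0 := norm_ne_zero_iff.2 hy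
  rw [norm_inversion_zero_one, inv_inv]
  simp only [inversion, dist_zero_right, vsub_eq_sub, sub_zero, vadd_eq_add, add_zero, smul_smul]
  congr 1
  field_simp

lemma norm_sub_inversion_zero_one {θ y : E} (hθ : ‖θ‖ = 1) (hy : y ≠ 0) :
    ‖θ - inversion 0 1 y‖ = ‖θ - y‖ / ‖y‖ := by
  have hn : ‖y‖ ≠ 0 := norm_ne_zero_iff.2 hy
  have hθ0 : θ ≠ 0 := fun h => by simp [h] at hθ
  have h := EuclideanGeometry.dist_inversion_mul_dist_center_eq (R := 1) hy hθ0
  rw [EuclideanGeometry.inversion_of_mem_sphere (x := θ) (by simpa using hθ), dist_zero_right,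
    dist_zero_right, hθ, mul_one, dist_comm, dist_comm y, dist_eq_norm, dist_eq_norm] at h
  rw [eq_div_iff hn, h]

lemma inversion_zero_one_image_punctured_ball :
    inversion 0 1 '' {y : E | 0 < ‖y‖ ∧ ‖y‖ < 1} = {w : E | 1 < ‖w‖} := by
  ext w
  constructor
  · rintro ⟨y, ⟨h0, h1⟩, rfl⟩
    rw [mem_ofPred_eq, norm_inversion_zero_one]
    exact (one_lt_inv₀ h0).2 h1
  · intro (hw : 1 < ‖w‖)
    refine ⟨inversion 0 1 w, ?_, EuclideanGeometry.inversion_inversion 0 one_ne_zero w⟩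
    rw [mem_ofPred_eq, norm_inversion_zero_one]
    exact ⟨by positivity, inv_lt_one_of_one_lt₀ hw⟩

variable [FiniteDimensional ℝ E]

lemma abs_det_fderiv_inversion_zero_one (y : E) :
    |((1 / dist y 0) ^ 2 • ((ℝ ∙ (y - 0))ᗮ.reflection : E →L[ℝ] E)).det|
      = (‖y‖⁻¹ ^ 2) ^ Module.finrank ℝ E := by
  have h : |LinearMap.det ((ℝ ∙ (y - 0))ᗮ.reflection.toLinearMap)| = 1 := by
    rw [Submodule.det_reflection, abs_pow, abs_neg, abs_one, one_pow]
  rw [ContinuousLinearMap.det, ContinuousLinearMap.toLinearMap_smul, LinearMap.det_smul, abs_mul]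
  refine (congrArg₂ (· * ·) ?_ h).trans (mul_one _)
  rw [dist_zero_right, one_div, abs_of_nonneg (by positivity)]

end Inversion

section Integrability

variable {E : Type*} [NormedAddCommGroup E] [NormedSpace ℝ E] [FiniteDimensional ℝ E]
  [MeasurableSpace E] [BorelSpace E] {μ : Measure E} [μ.IsAddHaarMeasure]

lemma integrableOn_ball_norm_rpow_neg (hE : 1 ≤ Module.finrank ℝ E) {a : ℝ}
    (ha : a < Module.finrank ℝ E) (r : ℝ) :
    IntegrableOn (fun x : E => ‖x‖ ^ (-a)) (Metric.ball 0 r) μ := by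
  refine integrableOn_ball_of_norm_le_rpow hE (C := 1) ha (ae_of_all _ fun x => ?_) ?_
  · rw [one_mul, Real.norm_of_nonneg (by positivity)]
  · exact (measurable_norm.pow_const (-a)).aestronglyMeasurable

lemma integrableOn_ball_norm_sub_rpow_neg (hE : 1 ≤ Module.finrank ℝ E) {a : ℝ}
    (ha : a < Module.finrank ℝ E) (θ : E) (r : ℝ) :
    IntegrableOn (fun x : E => ‖θ - x‖ ^ (-a)) (Metric.ball 0 r) μ := by
  have h := (integrable_indicator_iff Metric.isOpen_ball.measurableSet).2
    (integrableOn_ball_norm_rpow_neg (μ := μ) hE ha (‖θ‖ + r))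
  refine (h.comp_sub_left θ).integrableOn.congr_fun (fun x hx => ?_)
    Metric.isOpen_ball.measurableSet
  rw [mem_ball_zero_iff] at hx
  refine indicator_of_mem ?_ _
  rw [mem_ball_zero_iff]
  exact (norm_sub_le θ x).trans_lt (by gcongr)

end Integrability

lemma ladder_kernel_le {n m α d : ℝ} (hn0 : 0 < n) (hn1 : n < 1) (hm : 1 - n ≤ m)
    (hα0 : 0 < α) (hαd : α < d) :
    n ^ (-α) * ((1 - n ^ 2) ^ (α / 2) * m ^ (-d))
      ≤ 2 ^ (α / 2) * (2 ^ (d - α / 2) * n ^ (-α) + 2 ^ α * m ^ (-(d - α / 2))) := by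
  have hm0 : 0 < m := by linarith
  have h1 : (1 - n ^ 2) ^ (α / 2) ≤ 2 ^ (α / 2) * m ^ (α / 2) := by
    rw [← Real.mul_rpow (by norm_num) hm0.le]
    exact Real.rpow_le_rpow (by nlinarith) (by nlinarith) (by positivity)
  have half_rpow {x b : ℝ} (hx : 1 / 2 ≤ x) (hb : 0 ≤ b) : x ^ (-b) ≤ 2 ^ b := by
    rw [Real.rpow_neg (by linarith), ← Real.inv_rpow (by linarith)]
    refine Real.rpow_le_rpow (inv_nonneg.2 (by linarith)) ?_ hb
    exact (inv_anti₀ (by norm_num) hx).trans (by norm_num)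
  have h2 : n ^ (-α) * m ^ (-(d - α / 2))
      ≤ 2 ^ (d - α / 2) * n ^ (-α) + 2 ^ α * m ^ (-(d - α / 2)) := by
    rcases le_total n (1 / 2) with h | h
    · have := half_rpow (x := m) (b := d - α / 2) (by linarith) (by linarith)
      have h3 : 0 ≤ 2 ^ α * m ^ (-(d - α / 2)) := by positivity
      have h4 : 0 ≤ n ^ (-α) := by positivity
      nlinarith
    · have := half_rpow h hα0.le
      have h3 : 0 ≤ (2 : ℝ) ^ (d - α / 2) * n ^ (-α) := by positivity
      have h4 : 0 ≤ m ^ (-(d - α / 2)) := by positivity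
      nlinarith
  calc n ^ (-α) * ((1 - n ^ 2) ^ (α / 2) * m ^ (-d))
      ≤ n ^ (-α) * (2 ^ (α / 2) * m ^ (α / 2) * m ^ (-d)) := by gcongr
    _ = 2 ^ (α / 2) * (n ^ (-α) * m ^ (-(d - α / 2))) := by
        rw [show -(d - α / 2) = α / 2 + -d by ring, Real.rpow_add hm0]
        ring
    _ ≤ _ := by gcongr

lemma integrableOn_ladder_kernel {d : ℕ} (hd : 2 ≤ d) {α : ℝ} (hα0 : 0 < α) (hα2 : α < 2)
    {θ : EuclideanSpace ℝ (Fin d)} (hθ : ‖θ‖ = 1) (lam : ℝ)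
    {f : EuclideanSpace ℝ (Fin d) → ℝ} (hf : Measurable f) (hfb : ∃ C, ∀ y, |f y| ≤ C) :
    IntegrableOn (fun y : EuclideanSpace ℝ (Fin d) =>
        (‖y‖ : ℂ) ^ (Complex.I * (lam : ℂ) - (α : ℂ)) *
          (((1 - ‖y‖ ^ 2) ^ (α / 2) * ‖θ - y‖ ^ (-(d : ℝ)) * f (‖y‖⁻¹ • y) : ℝ) : ℂ))
      {y : EuclideanSpace ℝ (Fin d) | 0 < ‖y‖ ∧ ‖y‖ < 1} volume := by
  obtain ⟨C, hC⟩ := hfb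
  have hd' : (2 : ℝ) ≤ d := by exact_mod_cast hd
  have hfin : Module.finrank ℝ (EuclideanSpace ℝ (Fin d)) = d := by simp
  have hs : MeasurableSet {y : EuclideanSpace ℝ (Fin d) | 0 < ‖y‖ ∧ ‖y‖ < 1} := by measurability
  have hsub : {y : EuclideanSpace ℝ (Fin d) | 0 < ‖y‖ ∧ ‖y‖ < 1} ⊆ Metric.ball 0 1 :=
    fun y hy => mem_ball_zero_iff.2 hy.2
  have hE : 1 ≤ Module.finrank ℝ (EuclideanSpace ℝ (Fin d)) := by omega
  have i1 := (integrableOn_ball_norm_rpow_neg (E := EuclideanSpace ℝ (Fin d)) (μ := volume) hE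
    (a := α) (by rw [hfin]; linarith) 1).mono_set hsub
  have i2 := (integrableOn_ball_norm_sub_rpow_neg (E := EuclideanSpace ℝ (Fin d)) (μ := volume) hE
    (a := d - α / 2) (by rw [hfin]; linarith) θ 1).mono_set hsub
  refine Integrable.mono' ((((i1.const_mul (2 ^ ((d : ℝ) - α / 2))).add
    (i2.const_mul (2 ^ α))).const_mul (2 ^ (α / 2))).mul_const C) ?_ ?_
  · exact Measurable.aestronglyMeasurable (by fun_prop)
  · refine (ae_restrict_iff' hs).2 (ae_of_all _ fun y ⟨h0, h1⟩ => ?_)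
    have hm : 1 - ‖y‖ ≤ ‖θ - y‖ := hθ ▸ norm_sub_norm_le θ y
    have hk := ladder_kernel_le h0 h1 hm hα0 (show α < d by linarith)
    have hq : 0 ≤ (1 - ‖y‖ ^ 2) ^ (α / 2) := Real.rpow_nonneg (by nlinarith) _
    rw [norm_mul, Complex.norm_cpow_eq_rpow_re_of_pos h0, Complex.norm_real, norm_mul, norm_mul,
      Real.norm_of_nonneg hq, Real.norm_of_nonneg (Real.rpow_nonneg (norm_nonneg _) _),
      Real.norm_eq_abs, ← mul_assoc]
    have hre : (Complex.I * (lam : ℂ) - (α : ℂ)).re = -α := by simp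
    rw [hre]
    exact mul_le_mul hk (hC _) (abs_nonneg _)
      (le_trans (mul_nonneg (by positivity) (mul_nonneg hq (by positivity))) hk)

lemma ladder_kernel_inversion_eq (d : ℕ) (α lam c : ℝ) {n m : ℝ} (hn0 : 0 < n) (hn1 : n < 1)
    (hm : 0 ≤ m) :
    (n⁻¹ ^ 2) ^ d • (((n⁻¹ : ℝ) : ℂ) ^ (-(Complex.I * (lam : ℂ)) - (d : ℂ)) *
        (((n⁻¹ ^ 2 - 1) ^ (α / 2) * (m / n) ^ (-(d : ℝ)) * c : ℝ) : ℂ))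
      = (n : ℂ) ^ (Complex.I * (lam : ℂ) - (α : ℂ)) *
        (((1 - n ^ 2) ^ (α / 2) * m ^ (-(d : ℝ)) * c : ℝ) : ℂ) := by
  have hnC : (n : ℂ) ≠ 0 := by exact_mod_cast hn0.ne'
  have e1 : ((n⁻¹ : ℝ) : ℂ) ^ (-(Complex.I * (lam : ℂ)) - (d : ℂ))
      = (n : ℂ) ^ (Complex.I * (lam : ℂ)) * ((n ^ d : ℝ) : ℂ) := by
    rw [Complex.ofReal_inv, Complex.inv_cpow _ _ (by
      rw [Complex.arg_ofReal_of_nonneg hn0.le]; exact Real.pi_pos.ne), ← Complex.cpow_neg,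
      neg_sub, sub_neg_eq_add, add_comm, Complex.cpow_add _ _ hnC, Complex.cpow_natCast]
    push_cast
    rfl
  have e2 : (n : ℂ) ^ (Complex.I * (lam : ℂ) - (α : ℂ))
      = (n : ℂ) ^ (Complex.I * (lam : ℂ)) * ((n ^ (-α) : ℝ) : ℂ) := by
    rw [sub_eq_add_neg, Complex.cpow_add _ _ hnC, Complex.ofReal_cpow hn0.le, Complex.ofReal_neg]
  have e3 : (n⁻¹ ^ 2 - 1) ^ (α / 2) = n ^ (-α) * (1 - n ^ 2) ^ (α / 2) := by
    have : n⁻¹ ^ 2 - 1 = n ^ (-2 : ℝ) * (1 - n ^ 2) := by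
      rw [Real.rpow_neg hn0.le, Real.rpow_two]
      field_simp
    rw [this, Real.mul_rpow (by positivity) (by nlinarith), ← Real.rpow_mul hn0.le]
    ring_nf
  have e4 : (m / n) ^ (-(d : ℝ)) = m ^ (-(d : ℝ)) * n ^ d := by
    rw [Real.div_rpow hm hn0.le, Real.rpow_neg hn0.le, Real.rpow_natCast, div_inv_eq_mul]
  rw [e1, e2, e3, e4, Complex.real_smul, mul_assoc ((n : ℂ) ^ _), mul_assoc ((n : ℂ) ^ _), mul_left_comm]
  congr 1
  norm_cast
  rw [inv_pow, inv_pow, pow_right_comm]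
  field_simp

theorem ladder_potential_inversion_identity
    (d : ℕ) (hd : 2 ≤ d) (α : ℝ) (hα0 : 0 < α) (hα2 : α < 2)
    (θ : EuclideanSpace ℝ (Fin d)) (hθ : ‖θ‖ = 1) (lam : ℝ)
    (f : EuclideanSpace ℝ (Fin d) → ℝ) (hf : Measurable f)
    (hfb : ∃ C, ∀ y, |f y| ≤ C) :
    IntegrableOn (fun y : EuclideanSpace ℝ (Fin d) =>
        (‖y‖ : ℂ) ^ (Complex.I * (lam : ℂ) - (α : ℂ)) *
          (((1 - ‖y‖ ^ 2) ^ (α / 2) * ‖θ - y‖ ^ (-(d : ℝ)) * f (‖y‖⁻¹ • y) : ℝ) : ℂ))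
      {y : EuclideanSpace ℝ (Fin d) | 0 < ‖y‖ ∧ ‖y‖ < 1} volume
    ∧ IntegrableOn (fun w : EuclideanSpace ℝ (Fin d) =>
        (‖w‖ : ℂ) ^ (-(Complex.I * (lam : ℂ)) - (d : ℂ)) *
          (((‖w‖ ^ 2 - 1) ^ (α / 2) * ‖θ - w‖ ^ (-(d : ℝ)) * f (‖w‖⁻¹ • w) : ℝ) : ℂ))
      {w : EuclideanSpace ℝ (Fin d) | 1 < ‖w‖} volume
    ∧ (∫ y in {y : EuclideanSpace ℝ (Fin d) | 0 < ‖y‖ ∧ ‖y‖ < 1},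
        (‖y‖ : ℂ) ^ (Complex.I * (lam : ℂ) - (α : ℂ)) *
          (((1 - ‖y‖ ^ 2) ^ (α / 2) * ‖θ - y‖ ^ (-(d : ℝ)) * f (‖y‖⁻¹ • y) : ℝ) : ℂ))
      = ∫ w in {w : EuclideanSpace ℝ (Fin d) | 1 < ‖w‖},
        (‖w‖ : ℂ) ^ (-(Complex.I * (lam : ℂ)) - (d : ℂ)) *
          (((‖w‖ ^ 2 - 1) ^ (α / 2) * ‖θ - w‖ ^ (-(d : ℝ)) * f (‖w‖⁻¹ • w) : ℝ) : ℂ) := by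
  have hint := integrableOn_ladder_kernel hd hα0 hα2 hθ lam hf hfb
  have hs : MeasurableSet {y : EuclideanSpace ℝ (Fin d) | 0 < ‖y‖ ∧ ‖y‖ < 1} := by measurability
  have hderiv : ∀ y ∈ {y : EuclideanSpace ℝ (Fin d) | 0 < ‖y‖ ∧ ‖y‖ < 1},
      HasFDerivWithinAt (inversion 0 1) _ {y | 0 < ‖y‖ ∧ ‖y‖ < 1} y := fun y hy =>
    (EuclideanGeometry.hasFDerivAt_inversion (R := 1) (norm_pos_iff.1 hy.1)).hasFDerivWithinAt
  have hinj := (EuclideanGeometry.inversion_injective (0 : EuclideanSpace ℝ (Fin d))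
    one_ne_zero).injOn (s := {y | 0 < ‖y‖ ∧ ‖y‖ < 1})
  refine ⟨hint, ?_, ?_⟩
  · rw [← inversion_zero_one_image_punctured_ball,
      integrableOn_image_iff_integrableOn_abs_det_fderiv_smul _ hs hderiv hinj]
    refine hint.congr_fun (fun y hy => ?_) hs
    dsimp only
    rw [abs_det_fderiv_inversion_zero_one, norm_sub_inversion_zero_one hθ (norm_pos_iff.1 hy.1),
      inv_norm_smul_inversion_zero_one, norm_inversion_zero_one, finrank_euclideanSpace_fin,
      ladder_kernel_inversion_eq d α lam _ hy.1 hy.2 (norm_nonneg _)]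
  · rw [← inversion_zero_one_image_punctured_ball,
      integral_image_eq_integral_abs_det_fderiv_smul _ hs hderiv hinj]
    refine setIntegral_congr_fun hs fun y hy => ?_
    rw [abs_det_fderiv_inversion_zero_one, norm_sub_inversion_zero_one hθ (norm_pos_iff.1 hy.1),
      inv_norm_smul_inversion_zero_one, norm_inversion_zero_one, finrank_euclideanSpace_fin,
      ladder_kernel_inversion_eq d α lam _ hy.1 hy.2 (norm_nonneg _)]
end
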